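/- arXiv:1503.01704 — 9 statements merged into one kernel-verified Lean document; each statement's English description precedes it below -/
import Mathlib

section
/- Let G ↷ X and H ↷ Y be topological dynamical systems with H ↷ Y topologically free, let φ : X → Y be a homeomorphism, and let a : G × X → H be locally constant in the space variable and satisfy φ(g.x) = a(g,x).φ(x) for all g ∈ G and x ∈ X. Then a(g₁g₂, x) = a(g₁, g₂.x)·a(g₂, x) for all g₁, g₂ ∈ G and x ∈ X. -/
/-- A topological dynamical system `G ↷ X` is *topologically free* if for every
`g ≠ 1` the set of points moved by `g` is dense. -/
def TopologicallyFree (G : Type*) (X : Type*) [Group G] [TopologicalSpace X]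
    [MulAction G X] : Prop :=
  ∀ g : G, g ≠ 1 → Dense {x : X | g • x ≠ x}

open Topology

/-!
Both sides of the cocycle identity are locally constant in `x` and move `φ x` to
`φ ((g₁ * g₂) • x)`. Near `x` they are two fixed elements of `H` that agree on a neighbourhood of
`φ x`, because `φ` is open, and topological freeness forces such elements to be equal.
-/

namespace TopologicallyFree

variable {H X Y : Type*} [Group H] [TopologicalSpace X] [TopologicalSpace Y] [MulAction H Y]

theorem eq_of_eventually_smul_eq (hY : TopologicallyFree H Y) {h k : H} {y : Y}
    (hhk : ∀ᶠ z in 𝓝 y, h • z = k • z) : h = k := by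
  by_contra hne
  have hmoved : ∃ᶠ z in 𝓝 y, (k⁻¹ * h) • z ≠ z :=
    mem_closure_iff_frequently.mp (hY _ (fun hone => hne (inv_mul_eq_one.mp hone).symm) y)
  have hfixed : ∀ᶠ z in 𝓝 y, (k⁻¹ * h) • z = z :=
    hhk.mono fun z hz => by rw [mul_smul, hz, inv_smul_smul]
  obtain ⟨z, hz_moved, hz_fixed⟩ := (hmoved.and_eventually hfixed).exists
  exact hz_moved hz_fixed

theorem eq_of_isLocallyConstant_of_smul_eq (hY : TopologicallyFree H Y) {φ : X → Y}
    (hφ : IsOpenMap φ) {b c : X → H} (hb : IsLocallyConstant b) (hc : IsLocallyConstant c)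
    (hbc : ∀ x, b x • φ x = c x • φ x) : b = c := by
  funext x
  have hagree : ∀ᶠ z in 𝓝 x, b x • φ z = c x • φ z := by
    filter_upwards [hb.eventually_eq x, hc.eventually_eq x] with z hbz hcz
    rw [← hbz, ← hcz, hbc]
  exact hY.eq_of_eventually_smul_eq (hφ.nhds_le x hagree)

end TopologicallyFree

theorem cocycle_identity_general {G X H Y : Type*} [Semigroup G] [Group H]
    [TopologicalSpace X] [TopologicalSpace Y] [SemigroupAction G X] [ContinuousConstSMul G X]
    [MulAction H Y] (hY : TopologicallyFree H Y) {φ : X → Y} (hφ : IsOpenMap φ) {a : G → X → H}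
    (ha : ∀ g, IsLocallyConstant (a g)) (hφa : ∀ g x, φ (g • x) = a g x • φ x) (g₁ g₂ : G) (x : X) :
    a (g₁ * g₂) x = a g₁ (g₂ • x) * a g₂ x := by
  have hcomp : IsLocallyConstant fun x => a g₁ (g₂ • x) * a g₂ x :=
    ((ha g₁).comp_continuous (continuous_const_smul g₂)).mul (ha g₂)
  have hsmul (x : X) : a (g₁ * g₂) x • φ x = (a g₁ (g₂ • x) * a g₂ x) • φ x :=
    calc a (g₁ * g₂) x • φ x = φ (g₁ • g₂ • x) := by rw [← hφa, mul_smul]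
      _ = a g₁ (g₂ • x) • a g₂ x • φ x := by rw [hφa, hφa]
      _ = (a g₁ (g₂ • x) * a g₂ x) • φ x := (mul_smul _ _ _).symm
  exact congrFun
    (hY.eq_of_isLocallyConstant_of_smul_eq hφ (ha (g₁ * g₂)) hcomp hsmul) x

/-- If `H ↷ Y` is topologically free, `φ : X ≃ₜ Y` is a homeomorphism and
`a : G × X → H` is locally constant in the space variable and satisfies
`φ(g.x) = a(g,x).φ(x)`, then `a` satisfies the cocycle identity. -/
theorem cocycle_identity
    (G : Type*) (X : Type*) (H : Type*) (Y : Type*)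
    [Group G] [Group H]
    [TopologicalSpace X] [LocallyCompactSpace X] [T2Space X]
    [TopologicalSpace Y] [LocallyCompactSpace Y] [T2Space Y]
    [MulAction G X] [ContinuousConstSMul G X]
    [MulAction H Y] [ContinuousConstSMul H Y]
    (hY : TopologicallyFree H Y)
    (φ : X ≃ₜ Y) (a : G → X → H)
    (ha : ∀ g : G, IsLocallyConstant (a g))
    (hφ : ∀ (g : G) (x : X), φ (g • x) = a g x • φ x) :
    ∀ (g₁ g₂ : G) (x : X), a (g₁ * g₂) x = a g₁ (g₂ • x) * a g₂ x :=
  cocycle_identity_general hY φ.isOpenMap ha hφ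
end

section
/- Let G ↷ X and H ↷ Y be topologically free systems which are continuously orbit equivalent via (φ, a, b), with ψ = φ⁻¹. Then b(a(g,x), φ(x)) = g for all g ∈ G and x ∈ X; moreover b is uniquely determined by this identity: if b' : H × Y → G is locally constant in the space variable and satisfies b'(a(g,x), φ(x)) = g for all g ∈ G, x ∈ X, then b' = b. -/
/-!
In a topologically free system, group elements that act alike near a point are equal. Near `x` the
maps `a g` and `b (a g x) ∘ φ` are constant, so applying `ψ` to `φ (g • x') = a g x • φ x'` shows
that `b (a g x) (φ x)` acts like `g`. Hence `b · (φ x)` is a left inverse of `a · x`; exchanging the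
two systems, it is also a right inverse, and the only left inverse of a map with a right inverse is
that right inverse.
-/

open Function Topology

theorem TopologicallyFree.eq_of_eventually_smul_eq_s3 {G X : Type*} [Group G] [TopologicalSpace X]
    [MulAction G X] (hX : TopologicallyFree G X) {g₁ g₂ : G} {x : X}
    (h : ∀ᶠ x' in 𝓝 x, g₁ • x' = g₂ • x') : g₁ = g₂ := by
  by_contra hne
  have moved_dense := hX (g₁⁻¹ * g₂) fun heq => hne (inv_mul_eq_one.mp heq)
  obtain ⟨x', hmoved, heq⟩ := moved_dense.inter_nhds_nonempty h
  exact hmoved (by rw [mul_smul, inv_smul_eq_iff, heq])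

/-- The map `a` is an orbit cocycle of `φ : X → Y`: it is locally constant in the space variable
and `φ` carries the action of `g` at `x` to the action of `a g x` at `φ x`. The cocycle identity
itself is not required. A continuous orbit equivalence `(φ, a, b)` is a homeomorphism `φ` with
orbit cocycles `a` of `φ` and `b` of `φ⁻¹`. -/
structure IsOrbitCocycle {G X H Y : Type*} [TopologicalSpace X] [SMul G X] [SMul H Y]
    (φ : X → Y) (a : G → X → H) : Prop where
  isLocallyConstant (g : G) : IsLocallyConstant (a g)
  map_smul (g : G) (x : X) : φ (g • x) = a g x • φ x

theorem IsOrbitCocycle.leftInverse {G X H Y : Type*} [Group G] [TopologicalSpace X]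
    [TopologicalSpace Y] [MulAction G X] [SMul H Y] {φ : X → Y} {ψ : Y → X} {a : G → X → H}
    {b : H → Y → G} (ha : IsOrbitCocycle φ a) (hb : IsOrbitCocycle ψ b)
    (hX : TopologicallyFree G X) (hφ : Continuous φ) (hψφ : LeftInverse ψ φ) (x : X) :
    LeftInverse (b · (φ x)) (a · x) := by
  intro g
  have ha_const : ∀ᶠ x' in 𝓝 x, a g x' = a g x := (ha.isLocallyConstant g).eventually_eq x
  have hb_const : ∀ᶠ x' in 𝓝 x, b (a g x) (φ x') = b (a g x) (φ x) :=
    hφ.continuousAt.eventually ((hb.isLocallyConstant (a g x)).eventually_eq (φ x))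
  refine hX.eq_of_eventually_smul_eq_s3 (x := x) ?_
  filter_upwards [ha_const, hb_const] with x' ha_eq hb_eq
  calc b (a g x) (φ x) • x'
      = b (a g x) (φ x') • ψ (φ x') := by rw [hb_eq, hψφ x']
    _ = ψ (a g x' • φ x') := by rw [ha_eq, hb.map_smul]
    _ = g • x' := by rw [← ha.map_smul, hψφ]

theorem b_a_phi_eq_and_unique_general {G X H Y : Type*} [Group G] [Group H]
    [TopologicalSpace X] [TopologicalSpace Y] [MulAction G X] [MulAction H Y]
    (hX : TopologicallyFree G X) (hY : TopologicallyFree H Y)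
    (φ : X ≃ₜ Y) {a : G → X → H} {b : H → Y → G}
    (ha : IsOrbitCocycle φ a) (hb : IsOrbitCocycle φ.symm b) :
    (∀ (g : G) (x : X), b (a g x) (φ x) = g) ∧
    (∀ b' : H → Y → G, (∀ (g : G) (x : X), b' (a g x) (φ x) = g) → b' = b) := by
  refine ⟨fun g x => ha.leftInverse hb hX φ.continuous φ.symm_apply_apply x g, fun b' hb' => ?_⟩
  funext h y
  have left_inv : LeftInverse (b' · y) (a · (φ.symm y)) := fun g => by
    simpa only [φ.apply_symm_apply] using hb' g (φ.symm y)
  have right_inv : RightInverse (b · y) (a · (φ.symm y)) :=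
    hb.leftInverse ha hY φ.symm.continuous φ.apply_symm_apply y
  exact congrFun (left_inv.eq_rightInverse right_inv) h

/-- For topologically free systems which are continuously orbit equivalent via
`(φ, a, b)`, one has `b (a g x) (φ x) = g` for all `g, x`, and `b` is the unique
locally constant (in the space variable) map with this property. -/
theorem b_a_phi_eq_and_unique
    (G : Type*) (X : Type*) (H : Type*) (Y : Type*)
    [Group G] [Group H]
    [TopologicalSpace X] [LocallyCompactSpace X] [T2Space X]
    [TopologicalSpace Y] [LocallyCompactSpace Y] [T2Space Y]
    [MulAction G X] [ContinuousConstSMul G X]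
    [MulAction H Y] [ContinuousConstSMul H Y]
    (hX : TopologicallyFree G X) (hY : TopologicallyFree H Y)
    (φ : X ≃ₜ Y) (a : G → X → H) (b : H → Y → G)
    (ha : ∀ g : G, IsLocallyConstant (a g))
    (hb : ∀ h : H, IsLocallyConstant (b h))
    (hφ : ∀ (g : G) (x : X), φ (g • x) = a g x • φ x)
    (hψ : ∀ (h : H) (y : Y), φ.symm (h • y) = b h y • φ.symm y) :
    (∀ (g : G) (x : X), b (a g x) (φ x) = g) ∧
    (∀ b' : H → Y → G, (∀ h : H, IsLocallyConstant (b' h)) →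
      (∀ (g : G) (x : X), b' (a g x) (φ x) = g) → b' = b) := by
  obtain ⟨b_a, unique⟩ := b_a_phi_eq_and_unique_general hX hY φ ⟨ha, hφ⟩ ⟨hb, hψ⟩
  exact ⟨b_a, fun b' _ => unique b'⟩
end

section
/- Let G ↷ X and H ↷ Y be topologically free systems which are continuously orbit equivalent via (φ, a, b), with ψ = φ⁻¹. Let X_f = {x ∈ X : the G-stabilizer of x is trivial} and Y_f = {y ∈ Y : the H-stabilizer of y is trivial}. Then φ(X_f) = Y_f; in particular, for every x ∈ X_f the map G → H, g ↦ a(g, x), is a bijection. -/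
/-!
If `g • x = x` and `φ x` is free, then `a g x = 1`. By local constancy `a g = 1` on a neighbourhood
of `x`, and injectivity of `φ` makes `g` act trivially there, so topological freeness of `G ↷ X`
gives `g = 1`. Hence `x` is free as soon as `φ x` is, and symmetrically.
For the bijection, `φ (b h (φ x) • x) = h • φ x` and freeness of `φ x` give `a (b h (φ x)) x = h`;
exchanging the two systems, `h ↦ b h (φ x)` is a two-sided inverse of `g ↦ a g x`.
-/

/-- The points of `X` with trivial `G`-stabilizer, written `X_f` in the informal statement. They
are described elementwise rather than by `MulAction.stabilizer G x = ⊥`, so that the notion makes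
sense for monoid actions as well. -/
def freePoints (G X : Type*) [Monoid G] [MulAction G X] : Set X :=
  {x | ∀ g : G, g • x = x → g = 1}

section

variable {G H X Y : Type*}

theorem smul_left_injective_of_mem_freePoints [Group G] [MulAction G X] {x : X}
    (hx : x ∈ freePoints G X) : Function.Injective fun g : G => g • x := by
  intro g g' hgg'
  have hfix : (g⁻¹ * g') • x = x := by rw [mul_smul, inv_smul_eq_iff]; exact hgg'.symm
  exact inv_mul_eq_one.mp (hx _ hfix)

namespace TopologicallyFree

variable [Group G] [TopologicalSpace X] [MulAction G X] [Monoid H] [MulAction H Y]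

theorem eq_one_of_cocycle_eq_one (hX : TopologicallyFree G X) {f : X → Y}
    (hf : Function.Injective f) {a : G → X → H} (ha : ∀ g, IsLocallyConstant (a g))
    (hfa : ∀ g x, f (g • x) = a g x • f x) {g : G} {x : X} (hgx : a g x = 1) : g = 1 := by
  by_contra hg
  obtain ⟨z, hz : a g z = 1, hmoved⟩ :=
    (hX g hg).inter_open_nonempty _ ((ha g).isOpen_fiber 1) ⟨x, hgx⟩
  exact hmoved (hf (by rw [hfa, hz, one_smul]))

theorem mem_freePoints_of_apply_mem (hX : TopologicallyFree G X) {f : X → Y}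
    (hf : Function.Injective f) {a : G → X → H} (ha : ∀ g, IsLocallyConstant (a g))
    (hfa : ∀ g x, f (g • x) = a g x • f x) {x : X} (hx : f x ∈ freePoints H Y) :
    x ∈ freePoints G X := fun g hgx =>
  hX.eq_one_of_cocycle_eq_one hf ha hfa (hx (a g x) (by rw [← hfa, hgx]))

end TopologicallyFree

theorem rightInverse_cocycle [SMul G X] [Group H] [MulAction H Y] {f : X → Y} {k : Y → X}
    (hk : Function.RightInverse k f) {a : G → X → H} {b : H → Y → G}
    (hfa : ∀ g x, f (g • x) = a g x • f x) (hkb : ∀ h y, k (h • y) = b h y • k y)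
    {y : Y} (hy : y ∈ freePoints H Y) :
    Function.RightInverse (fun h => b h y) (fun g => a g (k y)) := fun h =>
  smul_left_injective_of_mem_freePoints hy <|
    calc a (b h y) (k y) • y = a (b h y) (k y) • f (k y) := by rw [hk y]
      _ = f (k (h • y)) := by rw [hkb, hfa]
      _ = h • y := hk (h • y)

theorem phi_maps_free_points_to_free_points_general
    [Group G] [Group H] [TopologicalSpace X] [TopologicalSpace Y]
    [MulAction G X] [MulAction H Y]
    (hX : TopologicallyFree G X) (hY : TopologicallyFree H Y)
    (φ : X ≃ Y) (a : G → X → H) (b : H → Y → G)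
    (ha : ∀ g, IsLocallyConstant (a g)) (hb : ∀ h, IsLocallyConstant (b h))
    (hφ : ∀ g x, φ (g • x) = a g x • φ x)
    (hψ : ∀ h y, φ.symm (h • y) = b h y • φ.symm y) :
    φ '' freePoints G X = freePoints H Y ∧
      ∀ x ∈ freePoints G X, Function.Bijective fun g => a g x := by
  have mem_iff (x : X) : φ x ∈ freePoints H Y ↔ x ∈ freePoints G X :=
    ⟨hX.mem_freePoints_of_apply_mem φ.injective ha hφ, fun hx =>
      hY.mem_freePoints_of_apply_mem φ.symm.injective hb hψ (by rwa [φ.symm_apply_apply])⟩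
  refine ⟨Set.ext fun y => ?_, fun x hx => ?_⟩
  · rw [φ.image_eq_preimage_symm, Set.mem_preimage, ← mem_iff, φ.apply_symm_apply]
  · have hleft := rightInverse_cocycle φ.symm_apply_apply hψ hφ hx
    have hright := rightInverse_cocycle φ.apply_symm_apply hφ hψ ((mem_iff x).mpr hx)
    rw [φ.symm_apply_apply] at hright
    exact Function.bijective_iff_has_inverse.mpr ⟨fun h => b h (φ x), hleft, hright⟩

end

/-- For topologically free systems which are continuously orbit equivalent via
`(φ, a, b)`, the homeomorphism `φ` maps the set of points with trivial `G`-stabilizer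
onto the set of points with trivial `H`-stabilizer; in particular, for every `x`
with trivial `G`-stabilizer, `g ↦ a g x` is a bijection. -/
theorem phi_maps_free_points_to_free_points
    (G : Type*) (X : Type*) (H : Type*) (Y : Type*)
    [Group G] [Group H]
    [TopologicalSpace X] [LocallyCompactSpace X] [T2Space X]
    [TopologicalSpace Y] [LocallyCompactSpace Y] [T2Space Y]
    [MulAction G X] [ContinuousConstSMul G X]
    [MulAction H Y] [ContinuousConstSMul H Y]
    (hX : TopologicallyFree G X) (hY : TopologicallyFree H Y)
    (φ : X ≃ₜ Y) (a : G → X → H) (b : H → Y → G)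
    (ha : ∀ g : G, IsLocallyConstant (a g))
    (hb : ∀ h : H, IsLocallyConstant (b h))
    (hφ : ∀ (g : G) (x : X), φ (g • x) = a g x • φ x)
    (hψ : ∀ (h : H) (y : Y), φ.symm (h • y) = b h y • φ.symm y) :
    φ '' {x : X | ∀ g : G, g • x = x → g = 1} = {y : Y | ∀ h : H, h • y = y → h = 1} ∧
    (∀ x ∈ {x : X | ∀ g : G, g • x = x → g = 1},
      Function.Bijective (fun g : G => a g x)) :=
  phi_maps_free_points_to_free_points_general hX hY φ.toEquiv a b ha hb hφ hψ
end

section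
/- Let G ↷ X be a topologically free system on a connected (hence nonempty) locally compact Hausdorff space X, and let H ↷ Y be a topologically free system. If G ↷ X and H ↷ Y are continuously orbit equivalent via (φ, a, b), then they are conjugate; indeed, there is a group isomorphism ρ : G → H such that the same homeomorphism φ satisfies φ(g.x) = ρ(g).φ(x) for all g ∈ G, x ∈ X. -/
/-!
A locally constant cocycle is constant on a connected space, so each `a g` and each `b h` is given
by a single group element. Faithfulness of the actions then determines these elements uniquely,
which forces `g ↦ a g` to be multiplicative and `h ↦ b h` to be its inverse. Topological freeness
yields this faithfulness as soon as the space is nonempty.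
-/

theorem TopologicallyFree.faithfulSMul {G X : Type*} [Group G] [TopologicalSpace X]
    [MulAction G X] [Nonempty X] (hX : TopologicallyFree G X) : FaithfulSMul G X := by
  refine faithfulSMul_iff.mpr fun g hg ↦ ?_
  by_contra hne
  obtain ⟨x, hx⟩ := (hX g hne).nonempty
  exact hx (hg x)

section Intertwining

variable {G H X Y : Type*}

theorem map_smul_eq_of_isLocallyConstant [SMul G X] [SMul H Y] [TopologicalSpace X]
    [PreconnectedSpace X] {φ : X → Y} {a : G → X → H} (ha : ∀ g, IsLocallyConstant (a g))
    (hφ : ∀ g x, φ (g • x) = a g x • φ x) (x₀ : X) (g : G) (x : X) :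
    φ (g • x) = a g x₀ • φ x := by
  rw [hφ, (ha g).apply_eq_of_preconnectedSpace x x₀]

theorem map_mul_of_map_smul [Semigroup G] [Semigroup H] [SemigroupAction G X]
    [SemigroupAction H Y] [FaithfulSMul H Y] {φ : X → Y} (hφ : Function.Surjective φ)
    {α : G → H} (hα : ∀ g x, φ (g • x) = α g • φ x) (g g' : G) :
    α (g * g') = α g * α g' := by
  refine eq_of_smul_eq_smul (hφ.forall.mpr fun x ↦ ?_)
  calc α (g * g') • φ x = φ (g • g' • x) := by rw [← hα, mul_smul]
    _ = (α g * α g') • φ x := by rw [hα, hα, mul_smul]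

theorem leftInverse_of_map_smul [SMul G X] [SMul H Y] [FaithfulSMul G X] {φ : X → Y} {ψ : Y → X}
    (hψφ : Function.LeftInverse ψ φ) {α : G → H} {β : H → G}
    (hα : ∀ g x, φ (g • x) = α g • φ x) (hβ : ∀ h y, ψ (h • y) = β h • ψ y) :
    Function.LeftInverse β α := by
  refine fun g ↦ eq_of_smul_eq_smul fun x : X ↦ ?_
  calc β (α g) • x = ψ (φ (g • x)) := by rw [hα, hβ, hψφ]
    _ = g • x := hψφ _

theorem exists_mulEquiv_of_map_smul [Semigroup G] [Semigroup H] [SemigroupAction G X]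
    [SemigroupAction H Y] [FaithfulSMul G X] [FaithfulSMul H Y] (φ : X ≃ Y)
    {α : G → H} {β : H → G} (hα : ∀ g x, φ (g • x) = α g • φ x)
    (hβ : ∀ h y, φ.symm (h • y) = β h • φ.symm y) :
    ∃ ρ : G ≃* H, ∀ g x, φ (g • x) = ρ g • φ x :=
  ⟨{ toFun := α
     invFun := β
     left_inv := leftInverse_of_map_smul φ.left_inv hα hβ
     right_inv := leftInverse_of_map_smul φ.right_inv hβ hα
     map_mul' := map_mul_of_map_smul φ.surjective hα }, hα⟩

theorem conjugate_of_coe_of_connected_general [Semigroup G] [Semigroup H]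
    [TopologicalSpace X] [ConnectedSpace X] [TopologicalSpace Y] [ConnectedSpace Y]
    [SemigroupAction G X] [FaithfulSMul G X] [SemigroupAction H Y] [FaithfulSMul H Y]
    (φ : X ≃ Y) {a : G → X → H} {b : H → Y → G}
    (ha : ∀ g, IsLocallyConstant (a g)) (hb : ∀ h, IsLocallyConstant (b h))
    (hφ : ∀ g x, φ (g • x) = a g x • φ x)
    (hψ : ∀ h y, φ.symm (h • y) = b h y • φ.symm y) :
    ∃ ρ : G ≃* H, ∀ g x, φ (g • x) = ρ g • φ x := by
  obtain ⟨x₀⟩ : Nonempty X := inferInstance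
  exact exists_mulEquiv_of_map_smul φ
    (map_smul_eq_of_isLocallyConstant ha hφ x₀)
    (map_smul_eq_of_isLocallyConstant hb hψ (φ x₀))

end Intertwining

/-- If `G ↷ X` is a topologically free system on a connected (hence nonempty) locally
compact Hausdorff space `X` and `H ↷ Y` is a topologically free system which is
continuously orbit equivalent to `G ↷ X` via `(φ, a, b)`, then the systems are
conjugate: indeed, there is a group isomorphism `ρ : G ≃* H` such that the same
homeomorphism `φ` intertwines the actions. -/
theorem conjugate_of_coe_of_connected
    (G : Type*) (X : Type*) (H : Type*) (Y : Type*)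
    [Group G] [Group H]
    [TopologicalSpace X] [LocallyCompactSpace X] [T2Space X] [ConnectedSpace X]
    [TopologicalSpace Y] [LocallyCompactSpace Y] [T2Space Y]
    [MulAction G X] [ContinuousConstSMul G X]
    [MulAction H Y] [ContinuousConstSMul H Y]
    (hX : TopologicallyFree G X) (hY : TopologicallyFree H Y)
    (φ : X ≃ₜ Y) (a : G → X → H) (b : H → Y → G)
    (ha : ∀ g : G, IsLocallyConstant (a g))
    (hb : ∀ h : H, IsLocallyConstant (b h))
    (hφ : ∀ (g : G) (x : X), φ (g • x) = a g x • φ x)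
    (hψ : ∀ (h : H) (y : Y), φ.symm (h • y) = b h y • φ.symm y) :
    ∃ ρ : G ≃* H, ∀ (g : G) (x : X), φ (g • x) = ρ g • φ x := by
  have : ConnectedSpace Y := φ.surjective.connectedSpace φ.continuous
  have := hX.faithfulSMul
  have := hY.faithfulSMul
  exact conjugate_of_coe_of_connected_general φ.toEquiv ha hb hφ hψ
end

section
/- Let p be a prime and l ≥ 1 an integer with gcd(l, p) = 1. Consider the action of ℤ on ZMod l × ℤ_p by m.(k, x) = (k + m, x + m) (diagonal translation, i.e. the odometer for l·p^∞), and the action of the group ZMod l × ℤ on ZMod l × ℤ_p by (j, m).(k, x) = (k + j, x + m). Then these two topological dynamical systems are continuously orbit equivalent. -/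
/-- `ZMod n` is given the discrete topology. -/
instance (n : ℕ) : TopologicalSpace (ZMod n) := ⊥
instance (n : ℕ) : DiscreteTopology (ZMod n) := ⟨rfl⟩

/-- The odometer action of `ℤ` on `ZMod l × ℤ_p` by diagonal translation
(the odometer for `l·p^∞`). -/
noncomputable def odo (p l : ℕ) [Fact p.Prime] (m : ℤ) (x : ZMod l × ℤ_[p]) : ZMod l × ℤ_[p] :=
  (x.1 + (m : ZMod l), x.2 + (m : ℤ_[p]))

/-- The action of `ZMod l × ℤ` on `ZMod l × ℤ_p` by translation in each factor. -/
noncomputable def prodAct (p l : ℕ) [Fact p.Prime] (j : ZMod l × ℤ) (x : ZMod l × ℤ_[p]) :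
    ZMod l × ℤ_[p] :=
  (x.1 + j.1, x.2 + (j.2 : ℤ_[p]))

/-!
Let `K → G → Q` be an extension of groups and let `G` act on `X`. A section `s` of `G → Q`
untwists the diagonal action on `Q × X`: in the coordinates `(q, -s q +ᵥ x)`, an element `g` moves
the second coordinate by `-s (π g + q) + g + s q`, which lies in `K` and depends only on `q`.
Conversely, `(r, k)` acts on the fibre over `q` as the element `s (r + q) + k - s q` of `G`. Thus
the diagonal action of `G` is continuously orbit equivalent to the product action of `Q × K` as
soon as `Q` is discrete. For `l ℤ → ℤ → ZMod l`, the subgroup `l ℤ` acts on `ℤ_[p]` as `ℤ` does,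
up to the homeomorphism `x ↦ l x`.
-/

/-- Actions of `G` on `X` and of `H` on `Y`, encoded as bare functions, are continuously orbit
equivalent: a homeomorphism `φ : X ≃ₜ Y` and its inverse carry translates to translates by
elements `a g x` and `b h y` that are locally constant in the space variable. -/
def ContinuouslyOrbitEquivalent {G H X Y : Type*} [TopologicalSpace X] [TopologicalSpace Y]
    (α : G → X → X) (β : H → Y → Y) : Prop :=
  ∃ (φ : X ≃ₜ Y) (a : G → X → H) (b : H → Y → G),
    (∀ g, IsLocallyConstant (a g)) ∧
    (∀ h, IsLocallyConstant (b h)) ∧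
    (∀ g x, φ (α g x) = β (a g x) (φ x)) ∧
    (∀ h y, φ.symm (β h y) = α (b h y) (φ.symm y))

section Shear

variable {Q X Y : Type*} [TopologicalSpace Q] [DiscreteTopology Q] [TopologicalSpace X]
  [TopologicalSpace Y]

/-- The homeomorphism `(q, x) ↦ (q, e q x)` given by a family of homeomorphisms indexed by a
discrete space; the topological analogue of `Equiv.prodShear`. -/
def discreteShear (e : Q → X ≃ₜ Y) : Q × X ≃ₜ Q × Y where
  toEquiv := (Equiv.refl Q).prodShear fun q ↦ (e q).toEquiv
  continuous_toFun := continuous_prod_of_discrete_left.mpr fun q ↦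
    continuous_const.prodMk (e q).continuous
  continuous_invFun := continuous_prod_of_discrete_left.mpr fun q ↦
    continuous_const.prodMk (e q).symm.continuous

theorem isLocallyConstant_comp_fst {α : Type*} (f : Q → α) :
    IsLocallyConstant fun x : Q × X ↦ f x.1 :=
  (IsLocallyConstant.of_discrete f).comp_continuous continuous_fst

end Shear

section Extension

variable {G K Q X Y : Type*} [AddGroup G] [AddGroup Q]

theorem exists_section_cocycle {π : G →+ Q} {ι : K → G} (hex : Function.Exact ι π) {s : Q → G}
    (hs : Function.RightInverse s π) :
    ∃ c : G → Q → K, ∀ g q, ι (c g q) = -s (π g + q) + (g + s q) := by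
  have mem_ker (g : G) (q : Q) : π (-s (π g + q) + (g + s q)) = 0 := by
    simp [hs q, hs (π g + q)]
  choose c hc using fun g q ↦ (hex _).mp (mem_ker g q)
  exact ⟨c, hc⟩

variable [AddAction G X] [VAdd K Y]
  [TopologicalSpace Q] [DiscreteTopology Q] [TopologicalSpace X] [ContinuousConstVAdd G X]
  [TopologicalSpace Y]

theorem continuouslyOrbitEquivalent_of_exact {π : G →+ Q} {ι : K → G}
    (hπ : Function.Surjective π) (hex : Function.Exact ι π) (Φ : Y ≃ₜ X)
    (hΦ : ∀ (k : K) (y : Y), Φ (k +ᵥ y) = ι k +ᵥ Φ y) :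
    ContinuouslyOrbitEquivalent
      (fun (g : G) (x : Q × X) ↦ (π g + x.1, g +ᵥ x.2))
      (fun (h : Q × K) (y : Q × Y) ↦ (h.1 + y.1, h.2 +ᵥ y.2)) := by
  obtain ⟨s, hs⟩ := hπ.hasRightInverse
  obtain ⟨c, hc⟩ := exists_section_cocycle hex hs
  have map_ι (k : K) : π (ι k) = 0 := (hex _).mpr ⟨k, rfl⟩
  refine ⟨discreteShear fun q ↦ (Homeomorph.vadd (-s q)).trans Φ.symm,
    fun g x ↦ (π g, c g x.1), fun h y ↦ s (h.1 + y.1) + ι h.2 + -s y.1,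
    fun g ↦ isLocallyConstant_comp_fst fun q ↦ (π g, c g q),
    fun h ↦ isLocallyConstant_comp_fst fun q ↦ s (h.1 + q) + ι h.2 + -s q, ?_, ?_⟩
  · rintro g ⟨q, x⟩
    have cocycle_vadd : -s (π g + q) +ᵥ (g +ᵥ x) = ι (c g q) +ᵥ (-s q +ᵥ x) := by
      simp [hc, vadd_vadd, add_assoc]
    refine Prod.ext rfl (Φ.injective ?_)
    simpa [discreteShear, hΦ] using cocycle_vadd
  · rintro ⟨r, k⟩ ⟨q, y⟩
    have map_cocycle : π (s (r + q) + ι k + -s q) = r := by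
      simp [hs q, hs (r + q), map_ι]
    have cocycle_vadd :
        s (r + q) +ᵥ Φ (k +ᵥ y) = (s (r + q) + ι k + -s q) +ᵥ (s q +ᵥ Φ y) := by
      simp [hΦ, vadd_vadd, add_assoc]
    refine Prod.ext ?_ ?_
    · simp [discreteShear, map_cocycle]
    · simpa [discreteShear] using cocycle_vadd

end Extension

theorem exact_mul_intCast_zmod (l : ℕ) :
    Function.Exact (fun k : ℤ ↦ (l : ℤ) * k) (Int.castAddHom (ZMod l)) := fun m ↦ by
  simp [CharP.intCast_eq_zero_iff (ZMod l) l, dvd_iff_exists_eq_mul_right, eq_comm]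

theorem odometer_coe_prod_general {R : Type*} [Ring R] [TopologicalSpace R] [IsTopologicalRing R]
    {l : ℕ} (hl : IsUnit (l : R)) :
    ContinuouslyOrbitEquivalent
      (fun (m : ℤ) (x : ZMod l × R) ↦ (x.1 + (m : ZMod l), x.2 + (m : R)))
      (fun (j : ZMod l × ℤ) (x : ZMod l × R) ↦ (x.1 + j.1, x.2 + (j.2 : R))) := by
  obtain ⟨u, hu⟩ := hl
  let _ : AddAction ℤ R := AddAction.compHom R (Int.castAddHom R)
  have vadd_def (m : ℤ) (x : R) : m +ᵥ x = (m : R) + x := rfl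
  have : ContinuousConstVAdd ℤ R := ⟨fun m ↦ continuous_const_add (m : R)⟩
  have mul_vadd (k : ℤ) (x : R) : u • (k +ᵥ x) = ((l : ℤ) * k) +ᵥ (u • x) := by
    simp [vadd_def, Units.smul_def, hu]
  simpa [vadd_def, add_comm] using continuouslyOrbitEquivalent_of_exact
    (ZMod.intCast_surjective (n := l)) (exact_mul_intCast_zmod l) (Homeomorph.smul u) mul_vadd

/-- For a prime `p` and `l ≥ 1` with `gcd(l, p) = 1`, the odometer
`ℤ ↷ ZMod l × ℤ_p` and the product action `ZMod l × ℤ ↷ ZMod l × ℤ_p` are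
continuously orbit equivalent. -/
theorem odometer_coe_prod (p l : ℕ) [Fact p.Prime] (hl : 1 ≤ l)
    (hcop : Nat.Coprime l p) :
    ∃ (φ : (ZMod l × ℤ_[p]) ≃ₜ (ZMod l × ℤ_[p]))
      (a : ℤ → ZMod l × ℤ_[p] → ZMod l × ℤ)
      (b : ZMod l × ℤ → ZMod l × ℤ_[p] → ℤ),
      (∀ g : ℤ, IsLocallyConstant (a g)) ∧
      (∀ h : ZMod l × ℤ, IsLocallyConstant (b h)) ∧
      (∀ (g : ℤ) (x : ZMod l × ℤ_[p]), φ (odo p l g x) = prodAct p l (a g x) (φ x)) ∧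
      (∀ (h : ZMod l × ℤ) (y : ZMod l × ℤ_[p]),
        φ.symm (prodAct p l h y) = odo p l (b h y) (φ.symm y)) := by
  have isUnit_l : IsUnit (l : ℤ_[p]) := by
    rw [PadicInt.isUnit_iff, PadicInt.norm_natCast_eq_one_iff]
    exact hcop.symm
  exact odometer_coe_prod_general isUnit_l
end

section
/- Let r ≥ 2, let p ≠ q be primes, and let n > 1 be an integer with gcd(p, n) = 1 = gcd(q, n). Let ℤ^r act on Z = (ZMod n × ℤ_p) × ℤ_q × (Fin (r−2) → ℤ_p) so that the first standard generator acts by diagonal translation (k, x) ↦ (k + 1, x + 1) on the first factor, the second standard generator acts by x ↦ x + 1 on the factor ℤ_q, and for each i the (i+2)-nd standard generator adds 1 in the i-th coordinate of the last factor; let ℤ^r act on W = ℤ_p × (ZMod n × ℤ_q) × (Fin (r−2) → ℤ_p) analogously, with the first generator translating ℤ_p by 1 and the second generator acting by diagonal translation on ZMod n × ℤ_q. Then ℤ^r ↷ Z and ℤ^r ↷ W are not conjugate: there is no homeomorphism φ : Z → W and group automorphism ρ of ℤ^r with φ(g.z) = ρ(g).φ(z) for all g ∈ ℤ^r and z ∈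 Z. -/
/-- The action of `ℤ^r` (with `r = s + 2`) on
`Z = (ZMod n × ℤ_p) × ℤ_q × (Fin s → ℤ_p)`: the first standard generator acts by
diagonal translation on the first factor, the second by translation on `ℤ_q`,
and the `(i+2)`-nd by translation in the `i`-th coordinate of the last factor. -/
noncomputable def actZ (p q n : ℕ) [Fact p.Prime] [Fact q.Prime] (s : ℕ)
    (g : Fin (s + 2) → ℤ) (z : (ZMod n × ℤ_[p]) × ℤ_[q] × (Fin s → ℤ_[p])) :
    (ZMod n × ℤ_[p]) × ℤ_[q] × (Fin s → ℤ_[p]) :=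
  ((z.1.1 + (g 0 : ZMod n), z.1.2 + (g 0 : ℤ_[p])),
    z.2.1 + (g 1 : ℤ_[q]),
    fun i => z.2.2 i + (g i.succ.succ : ℤ_[p]))

/-- The analogous action of `ℤ^r` on `W = ℤ_p × (ZMod n × ℤ_q) × (Fin s → ℤ_p)`. -/
noncomputable def actW (p q n : ℕ) [Fact p.Prime] [Fact q.Prime] (s : ℕ)
    (g : Fin (s + 2) → ℤ) (w : ℤ_[p] × (ZMod n × ℤ_[q]) × (Fin s → ℤ_[p])) :
    ℤ_[p] × (ZMod n × ℤ_[q]) × (Fin s → ℤ_[p]) :=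
  (w.1 + (g 0 : ℤ_[p]),
    (w.2.1.1 + (g 1 : ZMod n), w.2.1.2 + (g 1 : ℤ_[q])),
    fun i => w.2.2 i + (g i.succ.succ : ℤ_[p]))

/-!
A conjugacy preserves the elements of `ℤ^r` whose `q ^ k`-th multiples move a point less and less as
`k → ∞`. On `Z` the second standard generator is one of them, because `q ^ k → 0` in `ℤ_q`. On `W`,
let `d ≠ 1` be a divisor of `n` coprime to `q`, for instance `n` itself. Since `q` is invertible in
the compact rings `ℤ_p` and `ZMod d`, such an element has second coordinate divisible by `d` and all
other coordinates zero, so it lies in `d ℤ^r`. But an automorphism of `ℤ^r` preserves `d ℤ^r`, which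
contains no standard generator.
-/

open Filter Topology

/-- An element `a` of a topological additive monoid is topologically `q`-torsion if
`q ^ k • a → 0` as `k → ∞`. For a group acting by translations, this singles out, in terms of the
dynamics, the elements whose `q ^ k`-th multiples act more and more trivially. -/
def IsTopologicallyTorsion {A : Type*} [AddMonoid A] [TopologicalSpace A] (q : ℕ) (a : A) : Prop :=
  Tendsto (fun k : ℕ => q ^ k • a) atTop (𝓝 0)

namespace IsTopologicallyTorsion

theorem map {A B F : Type*} [AddMonoid A] [TopologicalSpace A] [AddMonoid B] [TopologicalSpace B]
    [FunLike F A B] [AddMonoidHomClass F A B] {f : F} (hf : Continuous f) {q : ℕ} {a : A}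
    (ha : IsTopologicallyTorsion q a) : IsTopologicallyTorsion q (f a) := by
  unfold IsTopologicallyTorsion at ha ⊢
  simp_rw [← map_nsmul]
  exact (map_zero f ▸ hf.tendsto 0).comp ha

theorem of_semiconj_translation {A B G H : Type*} [AddMonoid A] [TopologicalSpace A]
    [AddGroup B] [TopologicalSpace B] [ContinuousAdd B] [AddMonoid G] [AddMonoid H]
    {α : G →+ A} {β : H →+ B} {φ : A → B} {ρ : G →+ H} (hφ : ContinuousAt φ 0)
    (h : ∀ g, φ (α g) = φ 0 + β (ρ g)) {q : ℕ} {g : G} (hg : IsTopologicallyTorsion q (α g)) :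
    IsTopologicallyTorsion q (β (ρ g)) := by
  have h_orbit : Tendsto (fun k : ℕ => φ 0 + q ^ k • β (ρ g)) atTop (𝓝 (φ 0)) :=
    (hφ.tendsto.comp hg).congr fun k => by
      simp only [Function.comp_apply, ← map_nsmul, h]
  simpa [IsTopologicallyTorsion] using h_orbit.const_add (-φ 0)

theorem eq_zero_of_isUnit {R : Type*} [Semiring R] [TopologicalSpace R] [ContinuousMul R]
    [CompactSpace R] [T1Space R] {q : ℕ} (hq : IsUnit (q : R)) {a : R}
    (ha : IsTopologicallyTorsion q a) : a = 0 := by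
  obtain ⟨v, hv⟩ := hq.exists_left_inv
  let U : Ultrafilter ℕ := Ultrafilter.of atTop
  have h_inv : Tendsto (fun k => v ^ k) U (𝓝 (U.map (v ^ ·)).lim) :=
    (U.map (v ^ ·)).le_nhds_lim
  have h_const : Tendsto (fun k : ℕ => v ^ k * q ^ k • a) U (𝓝 0) := by
    simpa using h_inv.mul (ha.mono_left (Ultrafilter.of_le atTop))
  have h_cancel (k : ℕ) : v ^ k * q ^ k • a = a := by
    rw [nsmul_eq_mul, Nat.cast_pow, ← mul_assoc, pow_mul_pow_eq_one k hv, one_mul]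
  simpa only [h_cancel, tendsto_const_nhds_iff] using h_const

theorem padicInt_eq_zero {p q : ℕ} [Fact p.Prime] (hpq : p.Coprime q) {x : ℤ_[p]}
    (hx : IsTopologicallyTorsion q x) : x = 0 :=
  hx.eq_zero_of_isUnit (PadicInt.isUnit_iff.2 (PadicInt.norm_natCast_eq_one_iff.2 hpq))

theorem zmod_eq_zero {d q : ℕ} [NeZero d] (hqd : q.Coprime d) {x : ZMod d}
    (hx : IsTopologicallyTorsion q x) : x = 0 :=
  hx.eq_zero_of_isUnit ((ZMod.isUnit_iff_coprime q d).2 hqd)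

theorem dvd_of_intCast_zmod {n d q : ℕ} [NeZero d] (hdn : d ∣ n) (hqd : q.Coprime d) {a : ℤ}
    (ha : IsTopologicallyTorsion q (a : ZMod n)) : (d : ℤ) ∣ a := by
  have h_cast : IsTopologicallyTorsion q (a : ZMod d) := by
    simpa using ha.map (f := ZMod.castHom hdn (ZMod d)) continuous_of_discreteTopology
  exact (ZMod.intCast_zmod_eq_zero_iff_dvd a d).1 (h_cast.zmod_eq_zero hqd)

end IsTopologicallyTorsion

theorem isTopologicallyTorsion_padicInt {q : ℕ} [Fact q.Prime] (x : ℤ_[q]) :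
    IsTopologicallyTorsion q x := by
  have h_norm : ‖(q : ℤ_[q])‖ < 1 := PadicInt.norm_lt_one_iff_dvd _ |>.2 dvd_rfl
  simpa [IsTopologicallyTorsion] using
    (tendsto_pow_atTop_nhds_zero_of_norm_lt_one h_norm).mul_const x

theorem forall_dvd_map_apply {ι κ F : Type*} [FunLike F (ι → ℤ) (κ → ℤ)]
    [AddMonoidHomClass F (ι → ℤ) (κ → ℤ)] (f : F) {d : ℤ} {v : ι → ℤ} (hv : ∀ i, d ∣ v i) (j : κ) :
    d ∣ f v j := by
  choose u hu using hv
  obtain rfl : v = d • u := funext hu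
  rw [map_zsmul]
  exact dvd_mul_right d (f u j)

section Translations

variable (p q n s : ℕ) [Fact p.Prime] [Fact q.Prime]

/-- The homomorphism `ℤ^r → Z` along which `actZ` acts by translations, namely the orbit map of
`0`. -/
noncomputable def translationZ :
    (Fin (s + 2) → ℤ) →+ (ZMod n × ℤ_[p]) × ℤ_[q] × (Fin s → ℤ_[p]) :=
  AddMonoidHom.mk' (fun g => actZ p q n s g 0) fun g h => by ext <;> simp [actZ]

/-- The homomorphism `ℤ^r → W` along which `actW` acts by translations, namely the orbit map of
`0`. -/
noncomputable def translationW :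
    (Fin (s + 2) → ℤ) →+ ℤ_[p] × (ZMod n × ℤ_[q]) × (Fin s → ℤ_[p]) :=
  AddMonoidHom.mk' (fun g => actW p q n s g 0) fun g h => by ext <;> simp [actW]

variable {p q n s}

theorem actW_eq_add_translationW (g : Fin (s + 2) → ℤ)
    (w : ℤ_[p] × (ZMod n × ℤ_[q]) × (Fin s → ℤ_[p])) :
    actW p q n s g w = w + translationW p q n s g := by
  ext <;> simp [actW, translationW]

theorem isTopologicallyTorsion_translationZ_single :
    IsTopologicallyTorsion q (translationZ p q n s (Pi.single 1 1)) := by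
  let incl : ℤ_[q] →+ (ZMod n × ℤ_[p]) × ℤ_[q] × (Fin s → ℤ_[p]) :=
    (AddMonoidHom.inr _ _).comp (AddMonoidHom.inl _ _)
  have h_incl : Continuous incl :=
    continuous_const.prodMk (continuous_id.prodMk continuous_const)
  have h_eq : translationZ p q n s (Pi.single 1 1) = incl 1 := by
    have h_ne (i : Fin s) : i.succ.succ ≠ 1 := fun h => Fin.succ_ne_zero i (Fin.succ_injective _ h)
    ext <;> simp [translationZ, actZ, incl, h_ne]
  exact h_eq ▸ (isTopologicallyTorsion_padicInt 1).map h_incl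

theorem dvd_of_isTopologicallyTorsion_translationW {d : ℕ} (hpq : p ≠ q) (hdn : d ∣ n)
    (hqd : q.Coprime d) {g : Fin (s + 2) → ℤ}
    (hg : IsTopologicallyTorsion q (translationW p q n s g)) (j : Fin (s + 2)) : (d : ℤ) ∣ g j := by
  have hp_coprime : p.Coprime q := (Nat.coprime_primes Fact.out Fact.out).2 hpq
  have : NeZero d := ⟨fun hd => (Fact.out : q.Prime).ne_one (by simpa [hd] using hqd)⟩
  have h_snd := hg.map (f := AddMonoidHom.snd _ _) continuous_snd
  refine Fin.cases ?_ (Fin.cases ?_ fun i => ?_) j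
  · have h_fst : IsTopologicallyTorsion q (g 0 : ℤ_[p]) := by
      simpa [translationW, actW] using hg.map (f := AddMonoidHom.fst _ _) continuous_fst
    simp [Int.cast_eq_zero.1 (h_fst.padicInt_eq_zero hp_coprime)]
  · have h_zmod : IsTopologicallyTorsion q (g 1 : ZMod n) := by
      simpa [translationW, actW] using h_snd.map
        (f := (AddMonoidHom.fst _ _).comp (AddMonoidHom.fst _ _))
        (continuous_fst.comp continuous_fst)
    exact h_zmod.dvd_of_intCast_zmod hdn hqd
  · have h_pi : IsTopologicallyTorsion q (g i.succ.succ : ℤ_[p]) := by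
      simpa [translationW, actW] using h_snd.map
        (f := (Pi.evalAddMonoidHom _ i).comp (AddMonoidHom.snd _ _))
        ((continuous_apply i).comp continuous_snd)
    simp [Int.cast_eq_zero.1 (h_pi.padicInt_eq_zero hp_coprime)]

end Translations

theorem actZ_not_conjugate_actW_general (p q n d : ℕ) [Fact p.Prime] [Fact q.Prime]
    (hpq : p ≠ q) (hd : d ≠ 1) (hdn : d ∣ n) (hqd : q.Coprime d) (s : ℕ) :
    ¬ ∃ (φ : C((ZMod n × ℤ_[p]) × ℤ_[q] × (Fin s → ℤ_[p]),
             ℤ_[p] × (ZMod n × ℤ_[q]) × (Fin s → ℤ_[p])))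
        (ρ : (Fin (s + 2) → ℤ) ≃+ (Fin (s + 2) → ℤ)),
        ∀ (g : Fin (s + 2) → ℤ) (z : (ZMod n × ℤ_[p]) × ℤ_[q] × (Fin s → ℤ_[p])),
          φ (actZ p q n s g z) = actW p q n s (ρ g) (φ z) := by
  rintro ⟨φ, ρ, h⟩
  let e : Fin (s + 2) → ℤ := Pi.single 1 1
  have h_semiconj (g : Fin (s + 2) → ℤ) :
      φ (translationZ p q n s g) = φ 0 + translationW p q n s (ρ.toAddMonoidHom g) :=
    (h g 0).trans (actW_eq_add_translationW (ρ g) (φ 0))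
  have h_torsion : IsTopologicallyTorsion q (translationW p q n s (ρ e)) :=
    .of_semiconj_translation φ.continuous.continuousAt h_semiconj
      isTopologicallyTorsion_translationZ_single
  have h_dvd_image : ∀ j, (d : ℤ) ∣ ρ e j :=
    dvd_of_isTopologicallyTorsion_translationW hpq hdn hqd h_torsion
  have h_dvd_one : (d : ℤ) ∣ 1 := by
    simpa [e] using forall_dvd_map_apply ρ.symm h_dvd_image 1
  exact hd (Nat.dvd_one.1 (by exact_mod_cast h_dvd_one))

/-- For `r = s + 2 ≥ 2`, distinct primes `p ≠ q` and `n > 1` coprime to both,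
the systems `ℤ^r ↷ Z` and `ℤ^r ↷ W` are not conjugate: there is no homeomorphism
`φ : Z → W` and group automorphism `ρ` of `ℤ^r` with `φ(g.z) = ρ(g).φ(z)`. -/
theorem actZ_not_conjugate_actW (p q n : ℕ) [Fact p.Prime] [Fact q.Prime]
    (hpq : p ≠ q) (hn : 1 < n) (hpn : Nat.Coprime p n) (hqn : Nat.Coprime q n)
    (s : ℕ) :
    ¬ ∃ (φ : ((ZMod n × ℤ_[p]) × ℤ_[q] × (Fin s → ℤ_[p])) ≃ₜ
             (ℤ_[p] × (ZMod n × ℤ_[q]) × (Fin s → ℤ_[p])))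
        (ρ : (Fin (s + 2) → ℤ) ≃+ (Fin (s + 2) → ℤ)),
        ∀ (g : Fin (s + 2) → ℤ) (z : (ZMod n × ℤ_[p]) × ℤ_[q] × (Fin s → ℤ_[p])),
          φ (actZ p q n s g z) = actW p q n s (ρ g) (φ z) := by
  rintro ⟨φ, ρ, h⟩
  exact actZ_not_conjugate_actW_general p q n n hpq hn.ne' dvd_rfl hqn s ⟨φ, ρ, h⟩
end

section
/- Let G be a countable torsion-free group satisfying the Følner condition. Let G ↷ X and H ↷ Y be topologically free systems on nonempty compact Hausdorff spaces X and Y, and assume that G ↷ X is continuous H-cocycle rigid. If G ↷ X and H ↷ Y are continuously orbit equivalent, then they are conjugate. -/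
open scoped Classical in
/-- A group `G` satisfies the *Følner condition* if for every finite `S ⊆ G` and
`ε > 0` there is a nonempty finite `F ⊆ G` with `|sF △ F| < ε·|F|` for all `s ∈ S`. -/
def FolnerCondition (G : Type*) [Group G] : Prop :=
  ∀ (S : Finset G) (ε : ℝ), 0 < ε → ∃ F : Finset G, F.Nonempty ∧
    ∀ s ∈ S,
      (((F.image (fun x => s * x) \ F) ∪ (F \ F.image (fun x => s * x))).card : ℝ) <
        ε * (F.card : ℝ)

/-- `G ↷ X` is *continuous `H`-cocycle rigid* if every continuous `H`-cocycle
(i.e. every map `a : G × X → H`, locally constant in `x`, satisfying the cocycle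
identity) is continuously cohomologous to a group homomorphism `G →* H`. -/
def CocycleRigid (G : Type*) (X : Type*) (H : Type*) [Group G] [Group H]
    [TopologicalSpace X] [MulAction G X] : Prop :=
  ∀ a : G → X → H, (∀ g : G, IsLocallyConstant (a g)) →
    (∀ (g₁ g₂ : G) (x : X), a (g₁ * g₂) x = a g₁ (g₂ • x) * a g₂ x) →
    ∃ (ρ : G →* H) (u : X → H), IsLocallyConstant u ∧
      ∀ (g : G) (x : X), a g x = u (g • x) * ρ g * (u x)⁻¹

/-- Two systems are *continuously orbit equivalent* if there are a homeomorphism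
`φ` and maps `a`, `b`, locally constant in the space variable, intertwining the
orbits as in the definition of continuous orbit equivalence. -/
def ContOrbitEquiv (G : Type*) (X : Type*) (H : Type*) (Y : Type*)
    [Group G] [Group H] [TopologicalSpace X] [TopologicalSpace Y]
    [MulAction G X] [MulAction H Y] : Prop :=
  ∃ (φ : X ≃ₜ Y) (a : G → X → H) (b : H → Y → G),
    (∀ g : G, IsLocallyConstant (a g)) ∧
    (∀ h : H, IsLocallyConstant (b h)) ∧
    (∀ (g : G) (x : X), φ (g • x) = a g x • φ x) ∧
    (∀ (h : H) (y : Y), φ.symm (h • y) = b h y • φ.symm y)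

/-- Two systems are *conjugate* if there are a homeomorphism and a group isomorphism
intertwining the actions. -/
def Conjugate (G : Type*) (X : Type*) (H : Type*) (Y : Type*)
    [Group G] [Group H] [TopologicalSpace X] [TopologicalSpace Y]
    [MulAction G X] [MulAction H Y] : Prop :=
  ∃ (φ : X ≃ₜ Y) (ρ : G ≃* H), ∀ (g : G) (x : X), φ (g • x) = ρ g • φ x

/-!
By topological freeness an element of either acting group is determined by its action near a point.
Hence the orbit cocycle `a : G × X → H` satisfies the cocycle identity, and each `a(·, x)` is a
bijection `G → H`, inverse to the orbit cocycle of the reverse equivalence. Rigidity writes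
`a(g, x) = u(g.x) ρ(g) u(x)⁻¹` with `ρ` a homomorphism; by compactness `u` has finite range.

On `ker ρ` the injective map `a(·, x)` takes finitely many values, so `ker ρ` is finite, hence
trivial. Moreover `g ↦ a(g, x) u(x) = u(g.x) ρ(g)` maps onto `H` and stays within a finite set of
`ρ`. If `ρ` missed some `h`, then for every finite `F ⊆ G` the disjoint sets `ρ(F)` and `h ρ(F)`
would be covered by the values of this map on `SF`, for one fixed finite `S`; so `2|F| ≤ |SF|`,
against the Følner condition. Finally `x ↦ u(x)⁻¹.φ(x)` intertwines the actions along `ρ`.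
-/

open Function
open scoped Pointwise

section Groups

variable {G H : Type*} [Group G] [Group H]

theorem subgroup_eq_bot_of_finite_of_forall_not_isOfFinOrder
    (hG : ∀ g : G, g ≠ 1 → ¬IsOfFinOrder g) (N : Subgroup G) [Finite N] : N = ⊥ :=
  (Subgroup.eq_bot_iff_forall N).2 fun g hg =>
    by_contra fun hne =>
      hG g hne (Submonoid.isOfFinOrder_coe.2 (isOfFinOrder_of_finite (⟨g, hg⟩ : N)))

open scoped Classical in
theorem FolnerCondition.exists_card_mul_lt (hG : FolnerCondition G) (S : Finset G) {ε : ℝ}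
    (hε : 0 < ε) : ∃ F : Finset G, F.Nonempty ∧ ((S * F).card : ℝ) < (1 + ε) * F.card := by
  obtain ⟨F, hF, hFS⟩ := hG S (ε / (S.card + 1)) (by positivity)
  refine ⟨F, hF, ?_⟩
  have hFpos : (0 : ℝ) < F.card := mod_cast hF.card_pos
  have hcover : S * F ⊆ F ∪ S.biUnion fun s => F.image (s * ·) \ F := by
    intro x hx
    obtain ⟨s, hs, f, hf, rfl⟩ := Finset.mem_mul.1 hx
    by_cases hsf : s * f ∈ F
    · exact Finset.mem_union_left _ hsf
    · exact Finset.mem_union_right _ (Finset.mem_biUnion.2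
        ⟨s, hs, Finset.mem_sdiff.2 ⟨Finset.mem_image_of_mem _ hf, hsf⟩⟩)
  have hcard : (S * F).card ≤ F.card + ∑ s ∈ S, (F.image (s * ·) \ F).card :=
    (Finset.card_le_card hcover).trans <|
      (Finset.card_union_le _ _).trans (Nat.add_le_add_left Finset.card_biUnion_le _)
  have hshift : ∀ s ∈ S, ((F.image (s * ·) \ F).card : ℝ) ≤ ε / (S.card + 1) * F.card :=
    fun s hs => le_trans (mod_cast Finset.card_le_card Finset.subset_union_left) (hFS s hs).le
  calc ((S * F).card : ℝ)
      ≤ F.card + ∑ s ∈ S, ((F.image (s * ·) \ F).card : ℝ) := mod_cast hcard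
    _ ≤ F.card + ∑ _s ∈ S, ε / (S.card + 1) * F.card := by gcongr with s hs; exact hshift s hs
    _ = (1 + S.card / (S.card + 1) * ε) * F.card := by
      rw [Finset.sum_const, nsmul_eq_mul]; ring
    _ < (1 + 1 * ε) * F.card := by
      refine mul_lt_mul_of_pos_right ?_ hFpos
      gcongr
      exact (div_lt_one (by positivity)).2 (lt_add_one _)
    _ = (1 + ε) * F.card := by rw [one_mul]

theorem exists_finset_forall_mul_image_subset_image_mul [DecidableEq G] [DecidableEq H]
    {ρ : G →* H} (hρ : Injective ρ) {c : G → H} (hc : Surjective c)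
    (hcρ : (Set.range fun g => c g * (ρ g)⁻¹).Finite) (A : Finset H) :
    ∃ S : Finset G, ∀ F : Finset G, A * F.image ρ ⊆ (S * F).image c := by
  set U := Set.range fun g => c g * (ρ g)⁻¹
  have hS : (ρ ⁻¹' (U⁻¹ * A)).Finite := (hcρ.inv.mul A.finite_toSet).preimage hρ.injOn
  refine ⟨hS.toFinset, fun F k hk => ?_⟩
  obtain ⟨α, hα, _, hρf, rfl⟩ := Finset.mem_mul.1 hk
  obtain ⟨f, hf, rfl⟩ := Finset.mem_image.1 hρf
  obtain ⟨g, hg⟩ := hc (α * ρ f)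
  have hgf : ρ (g * f⁻¹) = (c g * (ρ g)⁻¹)⁻¹ * α := by
    rw [hg, map_mul, map_inv]
    group
  have hmem : g * f⁻¹ ∈ hS.toFinset := by
    rw [Set.Finite.mem_toFinset, Set.mem_preimage, hgf]
    exact Set.mul_mem_mul (Set.inv_mem_inv.2 (Set.mem_range_self g)) hα
  exact Finset.mem_image.2 ⟨g, by simpa using Finset.mul_mem_mul hmem hf, hg⟩

theorem card_pair_mul_image_of_notMem_range [DecidableEq H] {ρ : G →* H} (hρ : Injective ρ)
    {h : H} (hh : h ∉ Set.range ρ) (F : Finset G) :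
    (({1, h} : Finset H) * F.image ρ).card = 2 * F.card := by
  have hdisj : Disjoint (F.image ρ) (h • F.image ρ) := by
    rw [Finset.disjoint_left]
    intro k hk hk'
    obtain ⟨f, -, rfl⟩ := Finset.mem_image.1 hk
    obtain ⟨_, hf', hff'⟩ := Finset.mem_smul_finset.1 hk'
    obtain ⟨f', -, rfl⟩ := Finset.mem_image.1 hf'
    exact hh ⟨f * f'⁻¹, by rw [map_mul, map_inv, ← hff', smul_eq_mul, mul_inv_cancel_right]⟩
  rw [Finset.insert_eq, Finset.union_mul, Finset.singleton_one, one_mul, Finset.singleton_mul,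
    Finset.card_union_of_disjoint hdisj, Finset.card_smul_finset,
    Finset.card_image_of_injective _ hρ, two_mul]

theorem FolnerCondition.surjective_of_finite_range_mul_inv (hG : FolnerCondition G) {ρ : G →* H}
    (hρ : Injective ρ) {c : G → H} (hc : Surjective c)
    (hcρ : (Set.range fun g => c g * (ρ g)⁻¹).Finite) : Surjective ρ := by
  classical
  intro h
  by_contra hh
  obtain ⟨S, hS⟩ := exists_finset_forall_mul_image_subset_image_mul hρ hc hcρ {1, h}
  obtain ⟨F, -, hSF⟩ := hG.exists_card_mul_lt S one_pos
  have hle : 2 * F.card ≤ (S * F).card :=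
    (card_pair_mul_image_of_notMem_range hρ hh F).symm.trans_le <|
      (Finset.card_le_card (hS F)).trans Finset.card_image_le
  have hlt : (S * F).card < 2 * F.card := by
    rw [one_add_one_eq_two] at hSF
    exact mod_cast hSF
  exact hle.not_gt hlt

end Groups

section LocallyConstant

variable {X Y H : Type*} [TopologicalSpace X]

theorem isLocallyConstant_apply_of_forall {A B : Type*} {f : X → A} {k : A → X → B}
    (hf : IsLocallyConstant f) (hk : ∀ a, IsLocallyConstant (k a)) :
    IsLocallyConstant fun x => k (f x) x := by
  rw [IsLocallyConstant.iff_eventually_eq]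
  intro x
  filter_upwards [hf.eventually_eq x, (hk (f x)).eventually_eq x] with z hfz hkz
  rw [hfz, hkz]

variable [TopologicalSpace Y] [Group H] [MulAction H Y]

theorem isLocalHomeomorph_smul_of_isLocallyConstant [ContinuousConstSMul H Y] {v : X → H}
    (hv : IsLocallyConstant v) {φ : X → Y} (hφ : IsLocalHomeomorph φ) :
    IsLocalHomeomorph fun x => v x • φ x := by
  refine IsLocalHomeomorph.mk _ fun x => ?_
  obtain ⟨e, hxe, rfl⟩ := hφ x
  refine ⟨(e.transHomeomorph (Homeomorph.smul (v x))).restrOpen _ (hv.isOpen_fiber (v x)),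
    ⟨hxe, rfl⟩, ?_⟩
  rintro z ⟨-, hz : v z = v x⟩
  exact congrArg (· • e z) hz

theorem TopologicallyFree.eq_of_smul_eq (hY : TopologicallyFree H Y) {φ : X → Y}
    (hφ : IsOpenMap φ) {f g : X → H} (hf : IsLocallyConstant f) (hg : IsLocallyConstant g)
    (h : ∀ x, f x • φ x = g x • φ x) : f = g := by
  funext x
  by_contra hne
  have hmoved : Dense (φ ⁻¹' {y | ((g x)⁻¹ * f x) • y ≠ y}) :=
    (hY _ fun h1 => hne (inv_mul_eq_one.1 h1).symm).preimage hφ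
  obtain ⟨z, hz, hfz, hgz⟩ :=
    hmoved.inter_nhds_nonempty ((hf.eventually_eq x).and (hg.eventually_eq x))
  exact hz (by rw [mul_smul, ← hfz, h z, hgz, inv_smul_smul])

end LocallyConstant

section OrbitCocycle

variable {G X H Y : Type*} [Group G] [Group H] [TopologicalSpace X] [MulAction G X] [MulAction H Y]

/-- `a` is a continuous *orbit cocycle* of `φ : X → Y`: it is locally constant in the space
variable and `φ(g.x) = a(g, x).φ(x)`. The cocycle identity is not part of the definition; see
`IsOrbitCocycle.map_mul`. -/
structure IsOrbitCocycle_s11 (φ : X → Y) (a : G → X → H) : Prop where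
  isLocallyConstant (g : G) : IsLocallyConstant (a g)
  map_smul (g : G) (x : X) : φ (g • x) = a g x • φ x

namespace IsOrbitCocycle_s11

variable [TopologicalSpace Y]

theorem map_mul [ContinuousConstSMul G X] {φ : X → Y} {a : G → X → H} (ha : IsOrbitCocycle_s11 φ a)
    (hY : TopologicallyFree H Y) (hφ : IsOpenMap φ) (g₁ g₂ : G) (x : X) :
    a (g₁ * g₂) x = a g₁ (g₂ • x) * a g₂ x := by
  have hconst : IsLocallyConstant fun x => a g₁ (g₂ • x) * a g₂ x :=
    ((ha.isLocallyConstant g₁).comp_continuous (continuous_const_smul g₂)).mul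
      (ha.isLocallyConstant g₂)
  refine congrFun (hY.eq_of_smul_eq hφ (ha.isLocallyConstant _) hconst fun x => ?_) x
  rw [← ha.map_smul, mul_smul, mul_smul, ha.map_smul, ha.map_smul]

theorem leftInverse_s11 {φ : X ≃ₜ Y} {a : G → X → H} {b : H → Y → G} (ha : IsOrbitCocycle_s11 φ a)
    (hb : IsOrbitCocycle_s11 φ.symm b) (hX : TopologicallyFree G X) (x : X) :
    LeftInverse (fun h => b h (φ x)) (fun g => a g x) := by
  intro g
  have hconst : IsLocallyConstant fun x => b (a g x) (φ x) :=
    isLocallyConstant_apply_of_forall (ha.isLocallyConstant g) fun h =>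
      (hb.isLocallyConstant h).comp_continuous φ.continuous
  refine congrFun (hX.eq_of_smul_eq IsOpenMap.id hconst (.const g) fun x => ?_) x
  simpa [← ha.map_smul] using (hb.map_smul (a g x) (φ x)).symm

theorem rightInverse {φ : X ≃ₜ Y} {a : G → X → H} {b : H → Y → G} (ha : IsOrbitCocycle_s11 φ a)
    (hb : IsOrbitCocycle_s11 φ.symm b) (hY : TopologicallyFree H Y) (x : X) :
    RightInverse (fun h => b h (φ x)) (fun g => a g x) := by
  simpa only [RightInverse, φ.symm_apply_apply] using hb.leftInverse_s11 (φ := φ.symm) ha hY (φ x)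

end IsOrbitCocycle_s11

end OrbitCocycle

section TransferFunction

variable {G X H Y : Type*} [Group G] [Group H] [MulAction G X] [MulAction H Y]

/-- `u` is a *transfer function* from the homomorphism `ρ` to the cocycle `a`: it exhibits `a` as
cohomologous to `ρ`. Local constancy of `u` is a separate hypothesis wherever it matters. -/
def IsTransferFunction (u : X → H) (a : G → X → H) (ρ : G →* H) : Prop :=
  ∀ (g : G) (x : X), a g x = u (g • x) * ρ g * (u x)⁻¹

/-- The map `φ` twisted by the transfer function `u`. If `φ` has orbit cocycle `a` and `u`
transfers the homomorphism `ρ` to `a`, then the twisted map has orbit cocycle `ρ`. -/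
def transferTwist (u : X → H) (φ : X → Y) (x : X) : Y :=
  (u x)⁻¹ • φ x

namespace IsTransferFunction

variable {u : X → H} {a : G → X → H} {ρ : G →* H}

theorem finite_ker (hu : IsTransferFunction u a ρ) (hfin : (Set.range u).Finite) {x : X}
    (ha : Injective fun g => a g x) : Finite ρ.ker := by
  refine Set.Finite.of_injOn (f := fun g => u (g • x)) (fun _ _ => Set.mem_range_self _) ?_ hfin
  intro g hg g' hg' hgg'
  refine ha ?_
  simp only [hu g x, hu g' x, hgg', MonoidHom.mem_ker.1 hg, MonoidHom.mem_ker.1 hg']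

theorem finite_range_mul_inv (hu : IsTransferFunction u a ρ) (hfin : (Set.range u).Finite)
    (x : X) : (Set.range fun g => a g x * u x * (ρ g)⁻¹).Finite := by
  refine hfin.subset (Set.range_subset_iff.2 fun g => ⟨g • x, ?_⟩)
  rw [hu, inv_mul_cancel_right, mul_inv_cancel_right]

theorem transferTwist_smul (hu : IsTransferFunction u a ρ) {φ : X → Y}
    (hφ : ∀ (g : G) (x : X), φ (g • x) = a g x • φ x) (g : G) (x : X) :
    transferTwist u φ (g • x) = ρ g • transferTwist u φ x := by
  simp only [transferTwist, hφ, hu g x, smul_smul]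
  group

theorem transferTwist_surjective (hu : IsTransferFunction u a ρ) {φ : X → Y}
    (hφ : ∀ (g : G) (x : X), φ (g • x) = a g x • φ x) (hφs : Surjective φ) (hρ : Surjective ρ) :
    Surjective (transferTwist u φ) := by
  intro y
  obtain ⟨x, rfl⟩ := hφs y
  obtain ⟨g, hg⟩ := hρ (u x)
  exact ⟨g • x, by rw [hu.transferTwist_smul hφ, hg, transferTwist, smul_inv_smul]⟩

theorem transferTwist_injective (hu : IsTransferFunction u a ρ) {φ : X → Y}
    (hφ : ∀ (x x' : X) (h : H), φ x' = h • φ x → ∃ g : G, x' = g • x ∧ a g x = h)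
    (hρ : Injective ρ) : Injective (transferTwist u φ) := by
  intro x x' hxx'
  have horbit : φ x' = (u x' * (u x)⁻¹) • φ x := by
    rw [mul_smul, ← inv_smul_eq_iff]
    exact hxx'.symm
  obtain ⟨g, rfl, hg⟩ := hφ x x' _ horbit
  have hρg : ρ g = 1 := by simpa [hu g x] using hg
  rw [(map_eq_one_iff ρ hρ).1 hρg, one_smul]

end IsTransferFunction

end TransferFunction

theorem conjugate_of_coe_of_cocycleRigid_general
    {G X H Y : Type*} [Group G] [Group H]
    (hG : ∀ N : Subgroup G, N.Normal → Finite N → N = ⊥)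
    (hamen : FolnerCondition G)
    [TopologicalSpace X] [CompactSpace X] [Nonempty X] [TopologicalSpace Y]
    [MulAction G X] [ContinuousConstSMul G X] [MulAction H Y] [ContinuousConstSMul H Y]
    (hX : TopologicallyFree G X) (hY : TopologicallyFree H Y)
    (hrig : CocycleRigid G X H) (hcoe : ContOrbitEquiv G X H Y) :
    Conjugate G X H Y := by
  obtain ⟨φ, a, b, haconst, hbconst, hφ, hψ⟩ := hcoe
  have ha : IsOrbitCocycle_s11 φ a := ⟨haconst, hφ⟩
  have hb : IsOrbitCocycle_s11 φ.symm b := ⟨hbconst, hψ⟩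
  obtain ⟨ρ, u, huconst, hu : IsTransferFunction u a ρ⟩ :=
    hrig a haconst (ha.map_mul hY φ.isOpenMap)
  obtain ⟨x₀⟩ := ‹Nonempty X›
  have hρinj : Injective ρ := (MonoidHom.ker_eq_bot_iff ρ).1 <|
    hG _ ρ.normal_ker (hu.finite_ker huconst.range_finite (ha.leftInverse_s11 hb hX x₀).injective)
  have hρsurj : Surjective ρ := hamen.surjective_of_finite_range_mul_inv hρinj
    ((mul_right_surjective (u x₀)).comp (ha.rightInverse hb hY x₀).surjective)
    (hu.finite_range_mul_inv huconst.range_finite x₀)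
  have hlift : ∀ (x x' : X) (h : H), φ x' = h • φ x → ∃ g : G, x' = g • x ∧ a g x = h :=
    fun x x' h hh => ⟨b h (φ x), by simpa [← hh] using hψ h (φ x), ha.rightInverse hb hY x h⟩
  have hlocal : IsLocalHomeomorph (transferTwist u φ) :=
    isLocalHomeomorph_smul_of_isLocallyConstant huconst.inv φ.isLocalHomeomorph
  exact ⟨hlocal.toHomeomorphOfBijective
      ⟨hu.transferTwist_injective hlift hρinj, hu.transferTwist_surjective hφ φ.surjective hρsurj⟩,
    MulEquiv.ofBijective ρ ⟨hρinj, hρsurj⟩, hu.transferTwist_smul hφ⟩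

/-- Let `G` be a countable torsion-free group satisfying the Følner condition, and let
`G ↷ X` and `H ↷ Y` be topologically free systems on nonempty compact Hausdorff
spaces. If `G ↷ X` is continuous `H`-cocycle rigid, then continuous orbit equivalence
of the two systems implies conjugacy. -/
theorem conjugate_of_coe_of_cocycleRigid
    (G : Type*) (X : Type*) (H : Type*) (Y : Type*)
    [Group G] [Countable G] [Group H]
    (htf : ∀ g : G, g ≠ 1 → ¬IsOfFinOrder g)
    (hamen : FolnerCondition G)
    [TopologicalSpace X] [CompactSpace X] [T2Space X] [Nonempty X]
    [TopologicalSpace Y] [CompactSpace Y] [T2Space Y] [Nonempty Y]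
    [MulAction G X] [ContinuousConstSMul G X]
    [MulAction H Y] [ContinuousConstSMul H Y]
    (hX : TopologicallyFree G X) (hY : TopologicallyFree H Y)
    (hrig : CocycleRigid G X H)
    (hcoe : ContOrbitEquiv G X H Y) :
    Conjugate G X H Y :=
  conjugate_of_coe_of_cocycleRigid_general
    (fun N _ _ => subgroup_eq_bot_of_finite_of_forall_not_isOfFinOrder htf N) hamen hX hY hrig hcoe
end

section
/- Let G be a countable torsion-free group and X₀ a nonempty compact Hausdorff space, and suppose the Bernoulli shift G ↷ X₀^G, (g.x)_γ = x_{g⁻¹γ}, is topologically free. Let H be a finitely generated nilpotent group which is not virtually infinite cyclic (i.e., H has no infinite cyclic subgroup of finite index), and let H ↷ Y be a topologically free system. If G ↷ X₀^G and H ↷ Y are continuously orbit equivalent, then they are conjugate. -/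
/-- The Bernoulli shift action of `G` on `G → X₀`: `(g • x) γ = x (g⁻¹ * γ)`. -/
instance bernoulliShift (G : Type*) [Group G] (X₀ : Type*) :
    MulAction G (G → X₀) where
  smul g x := fun γ => x (g⁻¹ * γ)
  one_smul x := by funext γ; show x _ = x γ; rw [inv_one, one_mul]
  mul_smul g₁ g₂ x := by
    funext γ; show x _ = x _; rw [mul_inv_rev, mul_assoc]

lemma bernoulliShift_smul_def (G : Type*) [Group G] (X₀ : Type*) (g : G)
    (x : G → X₀) : g • x = fun γ => x (g⁻¹ * γ) := rfl

/-- The Bernoulli shift acts by homeomorphisms (continuously) on the product space. -/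
instance (G : Type*) [Group G] (X₀ : Type*) [TopologicalSpace X₀] :
    ContinuousConstSMul G (G → X₀) :=
  ⟨fun g => continuous_pi fun γ => continuous_apply (g⁻¹ * γ)⟩

/-!
Let `p` be a constant configuration of the Bernoulli shift of `G`, and let `a` be a continuous
cocycle. If `x` and `y` differ in finitely many places, then `(a g x)⁻¹ * a g y` is constant along
the edges of the Cayley graph of `G` outside a finite set, because for a generator `s` the map `a s`
depends on finitely many coordinates only. If `G` has one end, this quantity therefore converges
as `g → ∞`, and changing `x` outside a fixed finite set `E` does not affect the limit. So the limit
`u x` of `(a g x)⁻¹ * a g p` is a locally constant function of the coordinates of `x` in `E`, and it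
is the transfer function between `a` and the homomorphism `ρ = a · p`. When `a` is the cocycle of an
orbit equivalence `φ`, the map `ρ` is an isomorphism and `x ↦ (u x)⁻¹ • φ x` is a conjugacy.

The isomorphism `ρ` makes `G` nilpotent, and a nontrivial torsion-free nilpotent group which is
finitely generated but not virtually cyclic has one end, because of a central element `z` of
infinite order and the lines `⟨z⟩g` parallel to each other.
-/

open Filter Function Subgroup Topology
open scoped Pointwise

/-! ### Groups with one end -/

section OneEnd

variable {G α : Type*} [Group G] {S F : Set G} {f : G → α} {w z : G}

/-- `f` is constant along all edges `g — s * g`, `s ∈ S`, of the Cayley graph of `S` that start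
outside `F`. -/
def InvariantOff (S F : Set G) (f : G → α) : Prop :=
  ∀ s ∈ S, ∀ g ∉ F, f (s * g) = f g

/-- A finitely generated group has *one end* if it is infinite and removing a finite set `F` from
its Cayley graph leaves all vertices outside some larger finite set `E` in a single component.
Components enter through the unions `A` of components, which are the sets whose membership is
`InvariantOff S F`. -/
def IsOneEnded (G : Type*) [Group G] : Prop :=
  Infinite G ∧ ∃ S : Set G, S.Finite ∧ closure S = ⊤ ∧ ∀ F : Set G, F.Finite →
    ∃ E : Set G, E.Finite ∧ ∀ A : Set G, InvariantOff S F (· ∈ A) → A ⊆ E ∨ Aᶜ ⊆ E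

lemma IsOneEnded.exists_finite_forall_eq (hG : IsOneEnded G) (α : Type*) :
    ∃ S : Set G, S.Finite ∧ ∀ F : Set G, F.Finite → ∃ E : Set G, E.Finite ∧
      ∀ f : G → α, InvariantOff S F f → ∀ g ∉ E, ∀ k ∉ E, f g = f k := by
  obtain ⟨-, S, hS, -, hend⟩ := hG
  refine ⟨S, hS, fun F hF => ?_⟩
  obtain ⟨E, hE, hsub⟩ := hend F hF
  refine ⟨E, hE, fun f hf g hg k hk => ?_⟩
  have hlevel : InvariantOff S F (· ∈ {g | f g = f k}) := fun s hs g hg => by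
    simp only [Set.mem_ofPred_eq, hf s hs g hg]
  rcases hsub _ hlevel with h | h
  · exact absurd (h rfl) hk
  · exact not_not.1 fun hne => hg (h hne)

lemma eventually_pow_mul_notMem (hw : ¬IsOfFinOrder w) (hF : F.Finite) (g : G) :
    ∀ᶠ n : ℕ in atTop, w ^ n * g ∉ F := by
  rw [← Nat.cofinite_eq_atTop]
  have hinj : Injective fun n : ℕ => w ^ n * g :=
    (mul_left_injective g).comp (injective_pow_iff_not_isOfFinOrder.2 hw)
  exact (hF.preimage hinj.injOn).compl_mem_cofinite

lemma InvariantOff.eventually_pow_mul_mul_eq (hf : InvariantOff S F f) (hF : F.Finite)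
    (hwc : w ∈ center G) (hw : ¬IsOfFinOrder w) {h : G} (hh : h ∈ closure S) (g : G) :
    ∀ᶠ n : ℕ in atTop, f (w ^ n * (h * g)) = f (w ^ n * g) := by
  induction hh using closure_induction generalizing g with
  | mem s hs =>
    filter_upwards [eventually_pow_mul_notMem hw hF g] with n hn
    rw [← mul_assoc, ← mem_center_iff.1 (pow_mem hwc n) s, mul_assoc, hf s hs _ hn]
  | one => simp
  | mul x y _ _ hx hy =>
    filter_upwards [hx (y * g), hy g] with n hxn hyn
    rw [mul_assoc, hxn, hyn]
  | inv x _ hx =>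
    filter_upwards [hx (x⁻¹ * g)] with n hn
    rw [← hn, mul_inv_cancel_left]

lemma InvariantOff.eq_of_forall_pow_mul_notMem (hf : InvariantOff S F f) (hF : F.Finite)
    (hS : closure S = ⊤) (hwS : w ∈ S) (hwc : w ∈ center G) (hw : ¬IsOfFinOrder w) {g k : G}
    (hg : ∀ n : ℕ, w ^ n * g ∉ F) (hk : ∀ n : ℕ, w ^ n * k ∉ F) : f g = f k := by
  have hray {g : G} (hg : ∀ n : ℕ, w ^ n * g ∉ F) (n : ℕ) : f (w ^ n * g) = f g := by
    induction n with
    | zero => simp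
    | succ n ih => rw [pow_succ', mul_assoc, hf w hwS _ (hg n), ih]
  have hmem : g * k⁻¹ ∈ closure S := hS ▸ mem_top _
  obtain ⟨n, hn⟩ := (hf.eventually_pow_mul_mul_eq hF hwc hw hmem k).exists
  rwa [inv_mul_cancel_right, hray hg, hray hk] at hn

lemma finite_setOf_pow_mul_mem (hz : ¬IsOfFinOrder z) (hF : F.Finite) :
    {g | (∃ m : ℕ, z ^ m * g ∈ F) ∧ ∃ n : ℕ, z⁻¹ ^ n * g ∈ F}.Finite := by
  obtain ⟨N, hN⟩ := eventually_atTop.1 <|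
    (eventually_all_finite hF).2 fun q _ => eventually_pow_mul_notMem hz hF q
  refine ((Set.finite_Iic N).image2 (fun m p => (z ^ m)⁻¹ * p) hF).subset ?_
  rintro g ⟨⟨m, hm⟩, n, hn⟩
  refine ⟨m, ?_, _, hm, inv_mul_cancel_left _ _⟩
  by_contra hmN
  refine hN (m + n) (by grind) _ hn ?_
  rwa [pow_add, mul_assoc, inv_pow, mul_inv_cancel_left]

lemma exists_forall_mul_notMem_of_index_eq_zero {K : Subgroup G} (hK : K.index = 0)
    (hF : F.Finite) : ∃ g, ∀ k ∈ K, k * g ∉ F := by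
  have : Infinite (G ⧸ K) := index_eq_zero_iff_infinite.1 hK
  obtain ⟨q, hq⟩ := (hF.image fun f => (QuotientGroup.mk f⁻¹ : G ⧸ K)).exists_notMem
  obtain ⟨g, rfl⟩ := QuotientGroup.mk_surjective q
  refine ⟨g⁻¹, fun k hk hkF => hq ⟨_, hkF, QuotientGroup.eq.2 ?_⟩⟩
  simpa using hk

/-- A vertex `g` outside the finite set of `finite_setOf_pow_mul_mem` starts a ray in direction `z`
or `z⁻¹` that avoids `F`. By centrality this ray stays parallel to the line `⟨z⟩g₀`, which also
avoids `F`, and the two are joined by paths that leave `F` as one moves along. -/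
theorem isOneEnded_of_mem_center [Group.FG G] (hzc : z ∈ center G) (hz : ¬IsOfFinOrder z)
    (hindex : (zpowers z).index = 0) : IsOneEnded G := by
  obtain ⟨T, hT, hTfin⟩ := Group.fg_iff.1 ‹Group.FG G›
  have hgen : closure ({z, z⁻¹} ∪ T) = ⊤ :=
    top_unique (hT ▸ closure_mono Set.subset_union_right)
  refine ⟨.of_injective _ (injective_pow_iff_not_isOfFinOrder.2 hz), {z, z⁻¹} ∪ T,
    (Set.toFinite _).union hTfin, hgen, fun F hF => ⟨_, finite_setOf_pow_mul_mem hz hF, ?_⟩⟩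
  intro A hA
  obtain ⟨g₀, hg₀⟩ := exists_forall_mul_notMem_of_index_eq_zero hindex hF
  have hz_ray : ∀ n : ℕ, z ^ n * g₀ ∉ F := fun n => hg₀ _ (npow_mem_zpowers z n)
  have hzinv_ray : ∀ n : ℕ, z⁻¹ ^ n * g₀ ∉ F := fun n =>
    hg₀ _ (pow_mem (inv_mem (mem_zpowers z)) n)
  have hmem {g : G} (hg : ¬((∃ m : ℕ, z ^ m * g ∈ F) ∧ ∃ n : ℕ, z⁻¹ ^ n * g ∈ F)) :
      (g ∈ A) = (g₀ ∈ A) := by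
    rcases not_and_or.1 hg with hg | hg
    · exact hA.eq_of_forall_pow_mul_notMem hF hgen (by simp) hzc hz (not_exists.1 hg) hz_ray
    · exact hA.eq_of_forall_pow_mul_notMem hF hgen (by simp) (inv_mem hzc)
        (mt isOfFinOrder_inv_iff.1 hz) (not_exists.1 hg) hzinv_ray
  by_cases h : g₀ ∈ A
  · exact .inr fun g hg => not_not.1 fun hgE => hg ((hmem hgE).mpr h)
  · exact .inl fun g hg => not_not.1 fun hgE => h ((hmem hgE).mp hg)

lemma exists_infinite_cyclic_index_ne_zero_map {H : Type*} [Group H] (ρ : G ≃* H)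
    (h : ∃ K : Subgroup G, K.index ≠ 0 ∧ IsCyclic K ∧ Infinite K) :
    ∃ K : Subgroup H, K.index ≠ 0 ∧ IsCyclic K ∧ Infinite K := by
  obtain ⟨K, hindex, hcyc, hinf⟩ := h
  have e := ρ.subgroupMap K
  exact ⟨K.map ρ, by rwa [index_map_equiv], e.isCyclic.1 hcyc, e.toEquiv.infinite_iff.1 hinf⟩

theorem subsingleton_or_isOneEnded_of_isNilpotent [Group.FG G] [Group.IsNilpotent G]
    (htf : ∀ g : G, g ≠ 1 → ¬IsOfFinOrder g)
    (hG : ¬ ∃ K : Subgroup G, K.index ≠ 0 ∧ IsCyclic K ∧ Infinite K) :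
    Subsingleton G ∨ IsOneEnded G := by
  refine (subsingleton_or_nontrivial G).imp_right fun (_ : Nontrivial G) => ?_
  obtain ⟨z, hzc, hz1⟩ := (center G).bot_or_exists_ne_one.resolve_left
    (Group.IsNilpotent.center_ne_bot G)
  refine isOneEnded_of_mem_center hzc (htf z hz1) (not_not.1 fun hindex => hG ?_)
  exact ⟨zpowers z, hindex, inferInstance, Set.infinite_coe_iff.2 (infinite_zpowers.2 (htf z hz1))⟩

end OneEnd

/-! ### Locally constant functions -/

lemma exists_finite_dependsOn {ι α : Type*} {X : ι → Type*} [∀ i, TopologicalSpace (X i)]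
    [∀ i, CompactSpace (X i)] {f : (∀ i, X i) → α} (hf : IsLocallyConstant f) :
    ∃ F : Set ι, F.Finite ∧ DependsOn f F := by
  choose I U hU hsub using fun x => isOpen_pi_iff.1 (hf.isOpen_fiber (f x)) x rfl
  obtain ⟨t, ht⟩ := isCompact_univ.elim_finite_subcover (fun x => (I x : Set ι).pi (U x))
    (fun x => isOpen_set_pi (I x).finite_toSet fun i hi => (hU x i hi).1)
    (fun x _ => Set.mem_iUnion.2 ⟨x, fun i hi => (hU x i hi).2⟩)
  refine ⟨⋃ x ∈ t, (I x : Set ι), t.finite_toSet.biUnion fun x _ => (I x).finite_toSet, ?_⟩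
  intro x y hxy
  obtain ⟨c, hct, hxc⟩ := Set.mem_iUnion₂.1 (ht (Set.mem_univ x))
  have hyc : y ∈ (I c : Set ι).pi (U c) := fun i hi =>
    hxy i (Set.mem_biUnion hct hi) ▸ hxc i hi
  exact (hsub c hxc).trans (hsub c hyc).symm

lemma eq_of_forall_eventually_cofinite_eq {ι α : Type*} {X : ι → Type*}
    [∀ i, TopologicalSpace (X i)] [∀ i, CompactSpace (X i)] {f f' : (∀ i, X i) → α}
    (hf : IsLocallyConstant f) (hf' : IsLocallyConstant f') (p : ∀ i, X i)
    (h : ∀ x : ∀ i, X i, (∀ᶠ i in cofinite, x i = p i) → f x = f' x) : f = f' := by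
  classical
  funext x
  obtain ⟨F, hF, hdep⟩ := exists_finite_dependsOn (hf.prodMk hf')
  have hx : (f x, f' x) = (f (F.piecewise x p), f' (F.piecewise x p)) :=
    hdep fun i hi => (F.piecewise_eq_of_mem x p hi).symm
  have htail : ∀ᶠ i in cofinite, F.piecewise x p i = p i := by
    filter_upwards [hF.compl_mem_cofinite] with i hi using F.piecewise_eq_of_notMem x p hi
  rw [Prod.mk.injEq] at hx
  rw [hx.1, hx.2, h _ htail]

lemma continuous_smul_of_isLocallyConstant {M X Y : Type*} [TopologicalSpace X]
    [TopologicalSpace Y] [SMul M Y] [ContinuousConstSMul M Y] {v : X → M} {f : X → Y}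
    (hv : IsLocallyConstant v) (hf : Continuous f) : Continuous fun x => v x • f x := by
  refine continuous_iff_continuousAt.2 fun x =>
    (hf.const_smul (v x)).continuousAt.congr ?_
  filter_upwards [hv.eventually_eq x] with y hy
  rw [Pi.smul_apply, hy]

/-! ### Cocycle rigidity of the Bernoulli shift -/

/-- A continuous cocycle of the system `G ↷ X` with values in the discrete group `H`. -/
structure IsContCocycle {G X H : Type*} [Group G] [Group H] [TopologicalSpace X] [MulAction G X]
    (a : G → X → H) : Prop where
  isLocallyConstant (g : G) : IsLocallyConstant (a g)
  map_mul (g g' : G) (x : X) : a (g * g') x = a g (g' • x) * a g' x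

namespace IsContCocycle

lemma exists_mulEquiv_of_fixed {G X H : Type*} [Group G] [Group H] [TopologicalSpace X]
    [MulAction G X] {a : G → X → H} (ha : IsContCocycle a) {x₀ : X} (hx₀ : ∀ g : G, g • x₀ = x₀)
    (hbij : Bijective fun g => a g x₀) : ∃ ρ : G ≃* H, ∀ g, ρ g = a g x₀ :=
  ⟨MulEquiv.ofBijective (MonoidHom.mk' (fun g => a g x₀) fun g g' => by
    rw [ha.map_mul, hx₀]) hbij, fun _ => rfl⟩

variable {G X₀ H : Type*} [Group G] [Group H] [TopologicalSpace X₀] {a : G → (G → X₀) → H}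

lemma invariantOff_inv_mul (ha : IsContCocycle a) {S F D : Set G}
    (hF : ∀ s ∈ S, DependsOn (a s) F) {x y : G → X₀} (hxy : Set.EqOn x y Dᶜ) :
    InvariantOff S (F * D⁻¹) fun g => (a g x)⁻¹ * a g y := by
  intro s hs g hg
  have hs_eq : a s (g • x) = a s (g • y) := hF s hs fun γ hγ =>
    hxy fun hD => hg ⟨γ, hγ, (g⁻¹ * γ)⁻¹, Set.inv_mem_inv.2 hD, by simp⟩
  simp only [ha.map_mul, hs_eq, mul_inv_rev, mul_assoc, inv_mul_cancel_left]

variable [CompactSpace X₀]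

lemma exists_finite_forall_inv_mul_eq (ha : IsContCocycle a) (hG : IsOneEnded G) {D : Set G}
    (hD : D.Finite) : ∃ B : Set G, B.Finite ∧ ∀ x y : G → X₀, Set.EqOn x y Dᶜ →
      ∀ g ∉ B, ∀ k ∉ B, (a g x)⁻¹ * a g y = (a k x)⁻¹ * a k y := by
  obtain ⟨S, hS, hend⟩ := hG.exists_finite_forall_eq H
  choose F hF hdep using fun s => exists_finite_dependsOn (ha.isLocallyConstant s)
  obtain ⟨B, hB, hconst⟩ := hend ((⋃ s ∈ S, F s) * D⁻¹) ((hS.biUnion fun s _ => hF s).mul hD.inv)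
  refine ⟨B, hB, fun x y hxy => hconst _ (ha.invariantOff_inv_mul (fun s hs => ?_) hxy)⟩
  exact (hdep s).mono (Set.subset_biUnion_of_mem hs)

/-- Translating by `d⁻¹` moves the place where `x` and `y` differ to `1`, so that the exceptional
set `E` does not depend on `d`; the constant is found at `d` itself, where it is `1` because
`d * d⁻¹ = 1`. -/
lemma exists_finite_forall_eventuallyEq_of_eqOn_compl_singleton (ha : IsContCocycle a)
    (hG : IsOneEnded G) : ∃ E : Set G, E.Finite ∧ ∀ d ∉ E, ∀ x y : G → X₀,
      Set.EqOn x y {d}ᶜ → (a · x) =ᶠ[cofinite] (a · y) := by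
  obtain ⟨E, hE, hconst⟩ := ha.exists_finite_forall_inv_mul_eq hG (Set.finite_singleton 1)
  refine ⟨E, hE, fun d hd x y hxy => ?_⟩
  have htranslate : Set.EqOn (d⁻¹ • x) (d⁻¹ • y) {1}ᶜ := fun γ hγ =>
    hxy (by simpa using hγ)
  have hcocycle (g : G) (x : G → X₀) : a (g * d) (d⁻¹ • x) = a g x * a d (d⁻¹ • x) := by
    rw [ha.map_mul, smul_inv_smul]
  filter_upwards [(mul_left_injective d).tendsto_cofinite.eventually hE.compl_mem_cofinite]
    with g hg
  have hratio := hconst _ _ htranslate (g * d) hg d hd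
  rw [hcocycle, hcocycle] at hratio
  rwa [mul_inv_rev, mul_assoc, mul_right_inj, ← mul_assoc, mul_eq_right, inv_mul_eq_one] at hratio

lemma exists_finite_forall_eventuallyEq (ha : IsContCocycle a) (hG : IsOneEnded G) :
    ∃ E : Set G, E.Finite ∧ ∀ D : Set G, D.Finite → Disjoint D E → ∀ x y : G → X₀,
      Set.EqOn x y Dᶜ → (a · x) =ᶠ[cofinite] (a · y) := by
  classical
  obtain ⟨E, hE, hsingle⟩ := ha.exists_finite_forall_eventuallyEq_of_eqOn_compl_singleton hG
  refine ⟨E, hE, fun D hD => ?_⟩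
  induction D, hD using Set.Finite.induction_on with
  | empty =>
    intro _ x y hxy
    rw [Set.compl_empty, Set.eqOn_univ] at hxy
    rw [hxy]
  | @insert d D _ _ ih =>
    intro hdisj x y hxy
    rw [Set.disjoint_insert_left] at hdisj
    have hx : Set.EqOn x (update y d (x d)) Dᶜ := fun g hg => by
      rcases eq_or_ne g d with rfl | hgd
      · simp
      · rw [update_of_ne hgd]
        exact hxy (by simp_all)
    exact (ih hdisj.2 x _ hx).trans <|
      hsingle d hdisj.1 _ y fun g hg => update_of_ne hg _ _

lemma exists_isLocallyConstant_forall_eventually_mul_eq (ha : IsContCocycle a)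
    (hG : IsOneEnded G) (p : G → X₀) :
    ∃ u : (G → X₀) → H, IsLocallyConstant u ∧ ∀ x : G → X₀, (∀ᶠ k in cofinite, x k = p k) →
      ∀ᶠ g in cofinite, a g x * u x = a g p := by
  classical
  obtain ⟨E, hE, htail⟩ := ha.exists_finite_forall_eventuallyEq hG
  obtain ⟨B, hB, hconst⟩ := ha.exists_finite_forall_inv_mul_eq hG hE
  have := hG.1
  obtain ⟨g₀, hg₀⟩ := hB.exists_notMem
  have hcont : Continuous fun x : G → X₀ => E.piecewise x p := by
    refine continuous_pi fun g => ?_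
    by_cases hg : g ∈ E
    · simpa [hg] using continuous_apply g
    · simpa [hg] using continuous_const
  refine ⟨fun x => (a g₀ (E.piecewise x p))⁻¹ * a g₀ p,
    ((ha.isLocallyConstant g₀).comp_continuous hcont).comp fun h => h⁻¹ * a g₀ p,
    fun x hx => ?_⟩
  have hoff : Set.EqOn x (E.piecewise x p) ({k | x k ≠ p k} \ E)ᶜ := fun k hk => by
    by_cases hkE : k ∈ E <;> simp_all
  filter_upwards [htail _ (Set.Finite.sdiff hx) Set.disjoint_sdiff_left x _ hoff,
    hB.compl_mem_cofinite] with g hxg hg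
  rw [hxg, ← hconst _ p (Set.piecewise_eqOn_compl E x p) g hg g₀ hg₀, mul_inv_cancel_left]

/-- Two expansions of `a (k * g) x` for `k` far away compare `u x` with `u (g • x)`, at first for
`x` that agree with the fixed point almost everywhere; these are dense. -/
theorem exists_isLocallyConstant_forall_eq_mul (ha : IsContCocycle a) (hG : IsOneEnded G)
    (p : X₀) : ∃ u : (G → X₀) → H, IsLocallyConstant u ∧
      ∀ g x, a g x = u (g • x) * a g (fun _ => p) * (u x)⁻¹ := by
  obtain ⟨u, hu, hlim⟩ := ha.exists_isLocallyConstant_forall_eventually_mul_eq hG fun _ => p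
  refine ⟨u, hu, fun g => congrFun (eq_of_forall_eventually_cofinite_eq (ha.isLocallyConstant g)
    (((hu.comp_continuous (continuous_const_smul g)).prodMk hu).comp
      fun v : H × H => v.1 * a g (fun _ => p) * v.2⁻¹) (fun _ => p) fun x hx => ?_)⟩
  have hgx : ∀ᶠ k in cofinite, (g • x) k = p :=
    (mul_right_injective g⁻¹).tendsto_cofinite.eventually hx
  have := hG.1
  obtain ⟨k, hk, hkg⟩ := ((hlim _ hgx).and
    ((mul_left_injective g).tendsto_cofinite.eventually (hlim x hx))).exists
  have hfix : g • (fun _ : G => p) = fun _ => p := rfl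
  rw [ha.map_mul, ha.map_mul, hfix, ← hk, mul_assoc, mul_assoc, mul_right_inj] at hkg
  exact eq_mul_inv_of_mul_eq hkg

end IsContCocycle

/-! ### Continuous orbit equivalence -/

section OrbitEquivalence

variable {G X H Y : Type*} [Group G] [Group H] [TopologicalSpace X] [TopologicalSpace Y]
  [MulAction G X] [MulAction H Y] {a : G → X → H}

lemma TopologicallyFree.eq_of_eventually_smul_eq_s18 (hX : TopologicallyFree G X) {g k : G} {x : X}
    (h : ∀ᶠ y in 𝓝 x, g • y = k • y) : g = k := by
  by_contra hgk
  have hne : k⁻¹ * g ≠ 1 := mt inv_mul_eq_one.1 (Ne.symm hgk)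
  obtain ⟨y, hy, hmoved⟩ := mem_closure_iff_nhds.1 (hX _ hne x) _ h
  exact hmoved (by rw [mul_smul, hy, inv_smul_smul])

lemma TopologicallyFree.isContCocycle [ContinuousConstSMul G X] (hY : TopologicallyFree H Y)
    {φ : X → Y} (hopen : IsOpenMap φ) (ha : ∀ g, IsLocallyConstant (a g))
    (hφ : ∀ g x, φ (g • x) = a g x • φ x) : IsContCocycle a where
  isLocallyConstant := ha
  map_mul g g' x := by
    refine hY.eq_of_eventually_smul_eq_s18 (x := φ x) (hopen.nhds_le x (mem_map.2 ?_))
    filter_upwards [((ha g).comp_continuous (continuous_const_smul g')).eventually_eq x,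
      (ha g').eventually_eq x, (ha (g * g')).eventually_eq x] with w h₁ h₂ h₃
    simp only [comp_apply] at h₁
    change a (g * g') x • φ w = (a g (g' • x) * a g' x) • φ w
    rw [← h₁, ← h₂, ← h₃, ← hφ, mul_smul, hφ, hφ, mul_smul]

lemma TopologicallyFree.inverse_cocycle_apply (hX : TopologicallyFree G X) {b : H → Y → G}
    (φ : X ≃ₜ Y) (ha : ∀ g, IsLocallyConstant (a g)) (hb : ∀ h, IsLocallyConstant (b h))
    (hφ : ∀ g x, φ (g • x) = a g x • φ x) (hψ : ∀ h y, φ.symm (h • y) = b h y • φ.symm y)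
    (g : G) (x : X) : b (a g x) (φ x) = g := by
  refine hX.eq_of_eventually_smul_eq_s18 (x := x) ?_
  filter_upwards [(ha g).eventually_eq x,
    ((hb (a g x)).comp_continuous φ.continuous).eventually_eq x] with w h₁ h₂
  simp only [comp_apply] at h₂
  have hw := hψ (a g x) (φ w)
  rwa [h₂, ← h₁, ← hφ, φ.symm_apply_apply, φ.symm_apply_apply, h₁, eq_comm] at hw

theorem ContOrbitEquiv.exists_isContCocycle [ContinuousConstSMul G X]
    (hX : TopologicallyFree G X) (hY : TopologicallyFree H Y) (h : ContOrbitEquiv G X H Y) :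
    ∃ (φ : X ≃ₜ Y) (a : G → X → H), IsContCocycle a ∧ (∀ g x, φ (g • x) = a g x • φ x) ∧
      ∀ x, Bijective fun g => a g x := by
  obtain ⟨φ, a, b, ha, hb, hφ, hψ⟩ := h
  refine ⟨φ, a, hY.isContCocycle φ.isOpenMap ha hφ, hφ, fun x => bijective_iff_has_inverse.2
    ⟨fun h => b h (φ x), fun g => hX.inverse_cocycle_apply φ ha hb hφ hψ g x, fun h => ?_⟩⟩
  simpa using hY.inverse_cocycle_apply φ.symm hb ha hψ hφ h (φ x)

theorem ContOrbitEquiv.nonempty_mulEquiv [ContinuousConstSMul G X] (hX : TopologicallyFree G X)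
    (hY : TopologicallyFree H Y) (h : ContOrbitEquiv G X H Y) {x₀ : X}
    (hx₀ : ∀ g : G, g • x₀ = x₀) : Nonempty (G ≃* H) := by
  obtain ⟨φ, a, ha, -, hbij⟩ := h.exists_isContCocycle hX hY
  obtain ⟨ρ, -⟩ := ha.exists_mulEquiv_of_fixed hx₀ (hbij x₀)
  exact ⟨ρ⟩

theorem Conjugate.of_cohomologous [ContinuousConstSMul G X] [ContinuousConstSMul H Y]
    (φ : X ≃ₜ Y) (hφ : ∀ g x, φ (g • x) = a g x • φ x) (hsurj : ∀ x, Surjective fun g => a g x)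
    (ρ : G ≃* H) {u : X → H} (hu : IsLocallyConstant u)
    (hau : ∀ g x, a g x = u (g • x) * ρ g * (u x)⁻¹) : Conjugate G X H Y := by
  have hequiv (g : G) (x : X) : (u (g • x))⁻¹ • φ (g • x) = ρ g • (u x)⁻¹ • φ x := by
    rw [hφ, hau]
    simp only [smul_smul, mul_assoc, inv_mul_cancel_left]
  have hright : RightInverse (fun y => ρ.symm (u (φ.symm y)) • φ.symm y)
      fun x => (u x)⁻¹ • φ x := fun y => by
    simp only [hequiv, ρ.apply_symm_apply, φ.apply_symm_apply, smul_inv_smul]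
  have hinj : Injective fun x => (u x)⁻¹ • φ x := by
    intro x x' (hxx' : (u x)⁻¹ • φ x = (u x')⁻¹ • φ x')
    obtain ⟨g, hg : a g x' = u x * (u x')⁻¹⟩ := hsurj x' _
    have hgx : g • x' = x := φ.injective <| by
      rw [hφ, hg, mul_smul, ← hxx', smul_inv_smul]
    have hρg : ρ g = 1 := by
      simpa [hgx, hg] using hau g x'
    rw [← hgx, (map_eq_one_iff ρ ρ.injective).1 hρg, one_smul]
  exact ⟨{
    toFun := fun x => (u x)⁻¹ • φ x
    invFun := fun y => ρ.symm (u (φ.symm y)) • φ.symm y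
    left_inv := hright.leftInverse_of_injective hinj
    right_inv := hright
    continuous_toFun := continuous_smul_of_isLocallyConstant hu.inv φ.continuous
    continuous_invFun := continuous_smul_of_isLocallyConstant
      ((hu.comp_continuous φ.symm.continuous).comp ρ.symm) φ.symm.continuous }, ρ, hequiv⟩

end OrbitEquivalence

theorem conjugate_of_coe_bernoulli_nilpotent_general
    (G : Type*) [Group G] (hG : Subsingleton G ∨ IsOneEnded G)
    (X₀ : Type*) [TopologicalSpace X₀] [CompactSpace X₀] [Nonempty X₀]
    (hfree : TopologicallyFree G (G → X₀))
    (H : Type*) [Group H]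
    (Y : Type*) [TopologicalSpace Y] [MulAction H Y] [ContinuousConstSMul H Y]
    (hY : TopologicallyFree H Y)
    (hcoe : ContOrbitEquiv G (G → X₀) H Y) :
    Conjugate G (G → X₀) H Y := by
  obtain ⟨p⟩ := ‹Nonempty X₀›
  obtain ⟨φ, a, ha, hφ, hbij⟩ := hcoe.exists_isContCocycle hfree hY
  obtain ⟨ρ, hρ⟩ := ha.exists_mulEquiv_of_fixed (x₀ := fun _ => p) (fun _ => rfl) (hbij _)
  rcases hG with hG | hG
  · exact ⟨φ, ρ, fun g x => by rw [Subsingleton.elim g 1, map_one, one_smul, one_smul]⟩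
  · obtain ⟨u, hu, hau⟩ := ha.exists_isLocallyConstant_forall_eq_mul hG p
    exact .of_cohomologous φ hφ (fun x => (hbij x).surjective) ρ hu fun g x => hρ g ▸ hau g x

/-- Let `G` be a countable torsion-free group, `X₀` a nonempty compact Hausdorff
space, and suppose the Bernoulli shift `G ↷ X₀^G` is topologically free. Let `H` be
a finitely generated nilpotent group which is not virtually infinite cyclic, and let
`H ↷ Y` be a topologically free system. If `G ↷ X₀^G` and `H ↷ Y` are continuously
orbit equivalent, then they are conjugate. -/
theorem conjugate_of_coe_bernoulli_nilpotent
    (G : Type*) [Group G] [Countable G]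
    (htf : ∀ g : G, g ≠ 1 → ¬IsOfFinOrder g)
    (X₀ : Type*) [TopologicalSpace X₀] [CompactSpace X₀] [T2Space X₀] [Nonempty X₀]
    (hfree : TopologicallyFree G (G → X₀))
    (H : Type*) [Group H] [Group.FG H] [Group.IsNilpotent H]
    (hH : ¬ ∃ K : Subgroup H, K.index ≠ 0 ∧ IsCyclic K ∧ Infinite K)
    (Y : Type*) [TopologicalSpace Y] [LocallyCompactSpace Y] [T2Space Y]
    [MulAction H Y] [ContinuousConstSMul H Y]
    (hY : TopologicallyFree H Y)
    (hcoe : ContOrbitEquiv G (G → X₀) H Y) :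
    Conjugate G (G → X₀) H Y := by
  obtain ⟨p⟩ := ‹Nonempty X₀›
  obtain ⟨ρ⟩ := hcoe.nonempty_mulEquiv hfree hY (x₀ := fun _ => p) fun _ => rfl
  have : Group.IsNilpotent G := Group.nilpotent_of_mulEquiv ρ.symm
  have : Group.FG G := Group.fg_of_surjective (f := ρ.symm.toMonoidHom) ρ.symm.surjective
  exact conjugate_of_coe_bernoulli_nilpotent_general G
    (subsingleton_or_isOneEnded_of_isNilpotent htf
      (mt (exists_infinite_cyclic_index_ne_zero_map ρ) hH)) X₀ hfree H Y hY hcoe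
end

section
/- Let G and H be countable groups, and let G ↷ X and H ↷ Y be topologically free systems on compact Hausdorff spaces which admit a continuous orbit couple (p, q, a, b, g, h). Then there exists a topologically free topological coupling for G and H. Concretely, Ω = X × H with the G-action γ.(x, η) = (γ.x, a(γ, x)·η) and the right H-action (x, η).η' = (x, η·η') is such a coupling: the two actions commute, X × {e} is a compact open fundamental domain for the H-action, there is a compact open fundamental domain for the G-action, and the combined G × H-action on Ω is topologically free. -/
/-- The left `G`-action on `Ω = X × H`: `γ.(x, η) = (γ.x, a(γ, x)·η)`. -/
def Lact {G X H : Type*} [Group G] [Group H] [MulAction G X]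
    (a : G → X → H) (γ : G) (z : X × H) : X × H :=
  (γ • z.1, a γ z.1 * z.2)

/-- The right `H`-action on `Ω = X × H`: `(x, η).η' = (x, η·η')`. -/
def Ract {X H : Type*} [Group H] (z : X × H) (η' : H) : X × H :=
  (z.1, z.2 * η')

open Filter Topology

theorem isLocallyInjective_of_comp_eq_smul {X Y H : Type*} [TopologicalSpace Y] [Group H]
    [MulAction H Y] {p : X → Y} {q : Y → X} {h : Y → H} (hh : IsLocallyConstant h)
    (hpq : ∀ y, p (q y) = h y • y) :
    IsLocallyInjective q := by
  refine fun y₀ => ⟨{y | h y = h y₀}, hh.isOpen_fiber _, rfl, ?_⟩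
  intro y₁ (hy₁ : h y₁ = h y₀) y₂ (hy₂ : h y₂ = h y₀) hq
  apply smul_left_cancel (h y₀)
  rw [← hy₁, ← hpq, hq, hpq, hy₁, hy₂]

theorem isOpenMap_smul_of_isLocallyConstant {G X : Type*} [Group G] [TopologicalSpace X]
    [MulAction G X] [ContinuousConstSMul G X] {g : X → G} (hg : IsLocallyConstant g) :
    IsOpenMap fun x => g x • x := by
  refine isOpenMap_iff_nhds_le.mpr fun x => ?_
  have hgx : (fun x' => g x' • x') =ᶠ[𝓝 x] (g x • ·) := by
    filter_upwards [hg.eventually_eq x] with x' hx'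
    rw [hx']
  rw [map_congr hgx]
  exact (isOpenMap_smul (g x)).nhds_le x

theorem isOpenMap_of_comp_of_isLocallyInjective {X Y Z : Type*} [TopologicalSpace X]
    [TopologicalSpace Y] [TopologicalSpace Z] {p : X → Y} {q : Y → Z} (hp : Continuous p)
    (hq : Continuous q) (hinj : IsLocallyInjective q) (hqp : IsOpenMap (q ∘ p)) : IsOpenMap p := by
  refine isOpenMap_iff_nhds_le.mpr fun x S (hS : p ⁻¹' S ∈ 𝓝 x) => ?_
  obtain ⟨U, hU, hxU, hqU⟩ := hinj (p x)
  have hW : p ⁻¹' S ∩ p ⁻¹' U ∈ 𝓝 x := inter_mem hS ((hU.preimage hp).mem_nhds hxU)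
  have hqpW : q ⁻¹' ((q ∘ p) '' (p ⁻¹' S ∩ p ⁻¹' U)) ∈ 𝓝 (p x) :=
    hq.continuousAt (hqp.image_mem_nhds hW)
  filter_upwards [hqpW, hU.mem_nhds hxU] with y ⟨w, ⟨hwS, hwU⟩, hwy⟩ hyU
  exact hqU hwU hyU hwy ▸ hwS

theorem isLocallyConstant_prod_of_discrete_right {X H Z : Type*} [TopologicalSpace X]
    [TopologicalSpace H] [DiscreteTopology H] {f : X × H → Z}
    (hf : ∀ η, IsLocallyConstant fun x => f (x, η)) : IsLocallyConstant f := by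
  refine (IsLocallyConstant.iff_eventually_eq f).mpr fun ⟨x, η⟩ => ?_
  rw [nhds_prod_eq, nhds_discrete H, prod_pure, eventually_map]
  exact (hf η).eventually_eq x

theorem TopologicallyFree.eq_of_eventually_smul_eq_s19 {Z K W : Type*} [TopologicalSpace Z] [Group K]
    [TopologicalSpace W] [MulAction K W] (hW : TopologicallyFree K W) {r : Z → W}
    (hr : IsOpenMap r) {f₁ f₂ : Z → K} (hf₁ : IsLocallyConstant f₁) (hf₂ : IsLocallyConstant f₂)
    {z₀ : Z} (h : ∀ᶠ z in 𝓝 z₀, f₁ z • r z = f₂ z • r z) : f₁ z₀ = f₂ z₀ := by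
  by_contra hne
  have hk : (f₂ z₀)⁻¹ * f₁ z₀ ≠ 1 := fun hk => hne (inv_mul_eq_one.mp hk).symm
  have hfix : ∀ᶠ z in 𝓝 z₀, ((f₂ z₀)⁻¹ * f₁ z₀) • r z = r z := by
    filter_upwards [h, hf₁.eventually_eq z₀, hf₂.eventually_eq z₀] with z hz hz₁ hz₂
    rw [mul_smul, inv_smul_eq_iff, ← hz₁, ← hz₂, hz]
  obtain ⟨z, hmoved, hfixed⟩ := ((hW _ hk).preimage hr).inter_nhds_nonempty hfix
  exact hmoved hfixed

/-- The cocycle identity for `a : G × X → H` (curried), which is what makes `Lact a` an action. -/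
def IsCocycle {G X H : Type*} [Group G] [Group H] [MulAction G X] (a : G → X → H) : Prop :=
  ∀ γ₁ γ₂ x, a (γ₁ * γ₂) x = a γ₁ (γ₂ • x) * a γ₂ x

theorem TopologicallyFree.isCocycle {G X H Y : Type*} [Group G] [Group H] [TopologicalSpace X]
    [TopologicalSpace Y] [MulAction G X] [ContinuousConstSMul G X] [MulAction H Y]
    (hY : TopologicallyFree H Y) {p : X → Y} (hp : IsOpenMap p) {a : G → X → H}
    (ha : ∀ γ, IsLocallyConstant (a γ)) (hpa : ∀ γ x, p (γ • x) = a γ x • p x) :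
    IsCocycle a := by
  intro γ₁ γ₂ x
  refine hY.eq_of_eventually_smul_eq_s19 hp (ha _)
    (((ha γ₁).comp_continuous (continuous_const_smul γ₂)).mul (ha γ₂)) (.of_forall fun x' => ?_)
  calc a (γ₁ * γ₂) x' • p x' = p (γ₁ • γ₂ • x') := by rw [← hpa, mul_smul]
    _ = (a γ₁ (γ₂ • x') * a γ₂ x') • p x' := by rw [hpa, hpa, mul_smul]

section SkewProduct

variable {G X H : Type*} [Group G] [Group H] [MulAction G X] {a : G → X → H}

theorem IsCocycle.map_one (ha : IsCocycle a) (x : X) : a 1 x = 1 := by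
  simpa using ha 1 1 x

/-- The skew product action `Lact a` of `G` on `X × H`. It is not an instance because it depends
on the cocycle. -/
abbrev IsCocycle.mulAction (ha : IsCocycle a) : MulAction G (X × H) where
  smul := Lact a
  one_smul z := Prod.ext (one_smul G z.1) <|
    show a 1 z.1 * z.2 = z.2 by rw [ha.map_one, one_mul]
  mul_smul γ₁ γ₂ z := Prod.ext (mul_smul γ₁ γ₂ z.1) <|
    show a (γ₁ * γ₂) z.1 * z.2 = a γ₁ (γ₂ • z.1) * (a γ₂ z.1 * z.2) by rw [ha, mul_assoc]

theorem Lact_Ract_comm (γ : G) (η : H) (z : X × H) :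
    Lact a γ (Ract z η) = Ract (Lact a γ z) η :=
  Prod.ext rfl (mul_assoc _ _ _).symm

variable [TopologicalSpace X] [TopologicalSpace H]

theorem continuous_Lact [ContinuousMul H] [ContinuousConstSMul G X] {γ : G}
    (ha : Continuous (a γ)) : Continuous (Lact a γ) :=
  (continuous_fst.const_smul γ).prodMk ((ha.comp continuous_fst).mul continuous_snd)

theorem dense_setOf_Lact_Ract_ne (hX : TopologicallyFree G X) (ha : IsCocycle a) {γ : G} {η : H}
    (h : ¬(γ = 1 ∧ η = 1)) : Dense {z : X × H | Lact a γ (Ract z η) ≠ z} := by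
  by_cases hγ : γ = 1
  · have hη : η ≠ 1 := fun hη => h ⟨hγ, hη⟩
    refine dense_univ.mono fun z _ hz => hη ?_
    simpa [hγ, Lact, Ract, ha.map_one] using congrArg Prod.snd hz
  · refine ((hX γ hγ).preimage isOpenMap_fst).mono fun z (hz : γ • z.1 ≠ z.1) hfix => ?_
    exact hz (congrArg Prod.fst hfix)

end SkewProduct

/-- If `d : Ω → G` satisfies `d (γ • z) * γ = d z`, then `d z` is the unique element of `G` that
brings `z` into `d ⁻¹' {1}`; this is the resulting identification of `G × d ⁻¹' {1}` with `Ω`. -/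
def homeomorphOfReturnMap {G Ω : Type*} [Group G] [TopologicalSpace G] [ContinuousInv G]
    [TopologicalSpace Ω] [MulAction G Ω] [ContinuousSMul G Ω] (d : Ω → G) (hd : Continuous d)
    (hdmul : ∀ γ z, d (γ • z) * γ = d z) : G × (d ⁻¹' {1}) ≃ₜ Ω where
  toFun w := w.1 • (w.2 : Ω)
  invFun z := ((d z)⁻¹, ⟨d z • z, mul_eq_right.mp (hdmul (d z) z)⟩)
  left_inv := by
    rintro ⟨γ, z, hz : d z = 1⟩
    have hγ : d (γ • z) = γ⁻¹ := by rw [← mul_eq_one_iff_eq_inv, hdmul, hz]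
    simp [hγ]
  right_inv z := inv_smul_smul (d z) z
  continuous_toFun := by fun_prop
  continuous_invFun := by fun_prop

/-- A continuous orbit couple `(p, q, a, b, g, h)` for `G ↷ X` and `H ↷ Y`. The maps `a` and `b`
are curried, so local constancy in the space variable is imposed for each fixed group element. -/
structure ContinuousOrbitCouple (G X H Y : Type*) [Group G] [Group H] [TopologicalSpace X]
    [TopologicalSpace Y] [MulAction G X] [MulAction H Y] where
  p : X → Y
  q : Y → X
  continuous_p : Continuous p
  continuous_q : Continuous q
  a : G → X → H
  b : H → Y → G
  g : X → G
  h : Y → H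
  isLocallyConstant_a : ∀ γ, IsLocallyConstant (a γ)
  isLocallyConstant_b : ∀ η, IsLocallyConstant (b η)
  isLocallyConstant_g : IsLocallyConstant g
  isLocallyConstant_h : IsLocallyConstant h
  p_smul : ∀ γ x, p (γ • x) = a γ x • p x
  q_smul : ∀ η y, q (η • y) = b η y • q y
  q_p : ∀ x, q (p x) = g x • x
  p_q : ∀ y, p (q y) = h y • y

namespace ContinuousOrbitCouple

variable {G X H Y : Type*} [Group G] [Group H] [TopologicalSpace X] [TopologicalSpace Y]
  [MulAction G X] [MulAction H Y] (c : ContinuousOrbitCouple G X H Y)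

theorem isOpenMap_p [ContinuousConstSMul G X] : IsOpenMap c.p := by
  refine isOpenMap_of_comp_of_isLocallyInjective c.continuous_p c.continuous_q
    (isLocallyInjective_of_comp_eq_smul c.isLocallyConstant_h c.p_q) ?_
  rw [show c.q ∘ c.p = fun x => c.g x • x from funext c.q_p]
  exact isOpenMap_smul_of_isLocallyConstant c.isLocallyConstant_g

theorem isCocycle_a [ContinuousConstSMul G X] (hY : TopologicallyFree H Y) : IsCocycle c.a :=
  hY.isCocycle c.isOpenMap_p c.isLocallyConstant_a c.p_smul

/-- The projection `(x, η) ↦ η⁻¹ • p x` of `X × H` onto `Y`, which is constant on `G`-orbits. -/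
def proj (z : X × H) : Y :=
  z.2⁻¹ • c.p z.1

/-- The element of `G` that moves `z` into the fundamental domain of the `G`-action. -/
def returnMap (z : X × H) : G :=
  c.b z.2⁻¹ (c.p z.1) * c.g z.1

theorem proj_Lact (γ : G) (z : X × H) : c.proj (Lact c.a γ z) = c.proj z := by
  simp only [proj, Lact, c.p_smul, mul_inv_rev, mul_smul, inv_smul_smul]

theorem returnMap_smul_fst (z : X × H) : c.returnMap z • z.1 = c.q (c.proj z) := by
  rw [returnMap, proj, c.q_smul, c.q_p, mul_smul]

variable [TopologicalSpace H] [DiscreteTopology H]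

theorem continuous_proj [ContinuousConstSMul H Y] : Continuous c.proj :=
  continuous_prod_of_discrete_right.mpr fun η => c.continuous_p.const_smul η⁻¹

theorem isLocallyConstant_returnMap : IsLocallyConstant c.returnMap :=
  isLocallyConstant_prod_of_discrete_right fun η =>
    ((c.isLocallyConstant_b η⁻¹).comp_continuous c.continuous_p).mul c.isLocallyConstant_g

theorem returnMap_Lact_mul [ContinuousConstSMul G X] (hX : TopologicallyFree G X) (γ : G)
    (z : X × H) : c.returnMap (Lact c.a γ z) * γ = c.returnMap z := by
  have hL : Continuous (Lact c.a γ) := continuous_Lact (c.isLocallyConstant_a γ).continuous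
  refine hX.eq_of_eventually_smul_eq_s19 (f₁ := fun z => c.returnMap (Lact c.a γ z) * γ) isOpenMap_fst
    ((c.isLocallyConstant_returnMap.comp_continuous hL).mul (.const γ))
    c.isLocallyConstant_returnMap (.of_forall fun w => ?_)
  calc (c.returnMap (Lact c.a γ w) * γ) • w.1
      = c.returnMap (Lact c.a γ w) • (Lact c.a γ w).1 := mul_smul _ _ _
    _ = c.returnMap w • w.1 := by rw [returnMap_smul_fst, proj_Lact, returnMap_smul_fst]

theorem eq_of_returnMap_eq_one [ContinuousConstSMul G X] [ContinuousConstSMul H Y]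
    (hY : TopologicallyFree H Y) {z : X × H} (hz : c.returnMap z = 1) :
    (c.q (c.proj z), c.h (c.proj z)) = z := by
  have hq : ∀ {w}, c.returnMap w = 1 → c.q (c.proj w) = w.1 := fun {w} hw => by
    rw [← returnMap_smul_fst, hw, one_smul]
  have hsnd : IsLocallyConstant (fun w : X × H => w.2⁻¹) :=
    isLocallyConstant_prod_of_discrete_right fun η => .const η⁻¹
  have hh : c.h (c.proj z) * z.2⁻¹ = 1 := by
    refine hY.eq_of_eventually_smul_eq_s19 (f₁ := fun w => c.h (c.proj w) * w.2⁻¹) (f₂ := fun _ => 1)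
      (c.isOpenMap_p.comp isOpenMap_fst)
      ((c.isLocallyConstant_h.comp_continuous c.continuous_proj).mul hsnd) (.const 1) ?_
    filter_upwards [(c.isLocallyConstant_returnMap.isOpen_fiber 1).mem_nhds hz] with w hw
    calc (c.h (c.proj w) * w.2⁻¹) • c.p w.1 = c.h (c.proj w) • c.proj w := mul_smul _ _ _
      _ = (1 : H) • c.p w.1 := by rw [← c.p_q, hq hw, one_smul]
  exact Prod.ext (hq hz) (mul_inv_eq_one.mp hh)

theorem isCompact_returnMap_preimage_one [CompactSpace Y] [ContinuousConstSMul G X]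
    [ContinuousConstSMul H Y] (hY : TopologicallyFree H Y) :
    IsCompact (c.returnMap ⁻¹' {1}) := by
  have hqh : Continuous fun y => (c.q y, c.h y) :=
    c.continuous_q.prodMk c.isLocallyConstant_h.continuous
  exact (isCompact_range hqh).of_isClosed_subset (c.isLocallyConstant_returnMap.isClosed_fiber 1)
    fun z hz => ⟨c.proj z, c.eq_of_returnMap_eq_one hY hz⟩

theorem exists_homeomorph_prod_returnMap_preimage_one [TopologicalSpace G] [DiscreteTopology G]
    [ContinuousConstSMul G X] (hX : TopologicallyFree G X) (hY : TopologicallyFree H Y) :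
    ∃ e : G × (c.returnMap ⁻¹' {1}) ≃ₜ X × H,
      ∀ (γ : G) (z : c.returnMap ⁻¹' {1}), e (γ, z) = Lact c.a γ (z : X × H) := by
  let _ : MulAction G (X × H) := (c.isCocycle_a hY).mulAction
  have : ContinuousSMul G (X × H) := ⟨continuous_prod_of_discrete_left.mpr fun γ =>
    continuous_Lact (c.isLocallyConstant_a γ).continuous⟩
  exact ⟨homeomorphOfReturnMap c.returnMap c.isLocallyConstant_returnMap.continuous
    (c.returnMap_Lact_mul hX), fun _ _ => rfl⟩

end ContinuousOrbitCouple

theorem topological_coupling_of_continuous_orbit_couple_general {G X H Y : Type*}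
    [Group G] [Group H] [TopologicalSpace X] [CompactSpace X] [TopologicalSpace Y] [CompactSpace Y]
    [TopologicalSpace G] [DiscreteTopology G] [TopologicalSpace H] [DiscreteTopology H]
    [MulAction G X] [ContinuousConstSMul G X] [MulAction H Y] [ContinuousConstSMul H Y]
    (hX : TopologicallyFree G X) (hY : TopologicallyFree H Y)
    (c : ContinuousOrbitCouple G X H Y) :
    (∀ (γ : G) (η' : H) (z : X × H), Lact c.a γ (Ract z η') = Ract (Lact c.a γ z) η') ∧
    IsCompact ((Set.univ : Set X) ×ˢ ({1} : Set H)) ∧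
    IsOpen ((Set.univ : Set X) ×ˢ ({1} : Set H)) ∧
    (∃ e : X × H ≃ₜ X × H, ∀ (x : X) (η : H), e (x, η) = Ract (x, 1) η) ∧
    (∃ Ybar : Set (X × H), IsCompact Ybar ∧ IsOpen Ybar ∧
      ∃ e : G × Ybar ≃ₜ X × H, ∀ (γ : G) (z : Ybar), e (γ, z) = Lact c.a γ (z : X × H)) ∧
    (∀ (γ : G) (η : H), ¬(γ = 1 ∧ η = 1) →
      Dense {z : X × H | Lact c.a γ (Ract z η⁻¹) ≠ z}) :=
  ⟨Lact_Ract_comm,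
    isCompact_univ.prod isCompact_singleton,
    isOpen_univ.prod (isOpen_discrete _),
    ⟨Homeomorph.refl _, fun x η => Prod.ext rfl (one_mul η).symm⟩,
    ⟨c.returnMap ⁻¹' {1}, c.isCompact_returnMap_preimage_one hY,
      c.isLocallyConstant_returnMap.isOpen_fiber 1,
      c.exists_homeomorph_prod_returnMap_preimage_one hX hY⟩,
    fun _ _ h => dense_setOf_Lact_Ract_ne hX (c.isCocycle_a hY) (by rwa [inv_eq_one])⟩

/-- Let `G ↷ X` and `H ↷ Y` be topologically free systems on compact Hausdorff
spaces admitting a continuous orbit couple `(p, q, a, b, g, h)`. Then `Ω = X × H`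
with the actions `γ.(x, η) = (γ.x, a(γ, x)·η)` and `(x, η).η' = (x, η·η')` is a
topologically free topological coupling for `G` and `H`: the actions commute,
`X × {1}` is a compact open fundamental domain for the `H`-action, there is a
compact open fundamental domain for the `G`-action, and the combined
`G × H`-action is topologically free. -/
theorem topological_coupling_of_continuous_orbit_couple
    (G : Type*) (X : Type*) (H : Type*) (Y : Type*)
    [Group G] [Countable G] [Group H] [Countable H]
    [TopologicalSpace X] [CompactSpace X] [T2Space X]
    [TopologicalSpace Y] [CompactSpace Y] [T2Space Y]
    [TopologicalSpace G] [DiscreteTopology G] [TopologicalSpace H] [DiscreteTopology H]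
    [MulAction G X] [ContinuousConstSMul G X]
    [MulAction H Y] [ContinuousConstSMul H Y]
    (hX : TopologicallyFree G X) (hY : TopologicallyFree H Y)
    (p : X → Y) (q : Y → X) (hp : Continuous p) (hq : Continuous q)
    (a : G → X → H) (b : H → Y → G) (gg : X → G) (hh : Y → H)
    (ha : ∀ γ : G, IsLocallyConstant (a γ))
    (hb : ∀ η : H, IsLocallyConstant (b η))
    (hgg : IsLocallyConstant gg) (hhh : IsLocallyConstant hh)
    (hpa : ∀ (γ : G) (x : X), p (γ • x) = a γ x • p x)
    (hqb : ∀ (η : H) (y : Y), q (η • y) = b η y • q y)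
    (hqp : ∀ x : X, q (p x) = gg x • x)
    (hpq : ∀ y : Y, p (q y) = hh y • y) :
    (∀ (γ : G) (η' : H) (z : X × H), Lact a γ (Ract z η') = Ract (Lact a γ z) η') ∧
    IsCompact ((Set.univ : Set X) ×ˢ ({1} : Set H)) ∧
    IsOpen ((Set.univ : Set X) ×ˢ ({1} : Set H)) ∧
    (∃ e : X × H ≃ₜ X × H, ∀ (x : X) (η : H), e (x, η) = Ract (x, 1) η) ∧
    (∃ Ybar : Set (X × H), IsCompact Ybar ∧ IsOpen Ybar ∧
      ∃ e : G × Ybar ≃ₜ X × H, ∀ (γ : G) (z : Ybar), e (γ, z) = Lact a γ (z : X × H)) ∧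
    (∀ (γ : G) (η : H), ¬(γ = 1 ∧ η = 1) →
      Dense {z : X × H | Lact a γ (Ract z η⁻¹) ≠ z}) :=
  topological_coupling_of_continuous_orbit_couple_general hX hY
    ⟨p, q, hp, hq, a, b, gg, hh, ha, hb, hgg, hhh, hpa, hqb, hqp, hpq⟩
end
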